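/- arXiv:1706.02094 — 5 statements merged into one kernel-verified Lean document; each statement's English description precedes it below -/
import Mathlib

section
/- Let Y be a triangulable space, i.e., a compact topological space homeomorphic to the geometric realization |P| of a finite simplicial complex P in some ℝⁿ, and let O ⊆ Y be an open subset. Then every open cover 𝒱 of O has a refinement 𝒰 which is an open cover of O, is locally finite in O, and is a good cover of O (every nonempty intersection of finitely many members of 𝒰 is contractible). -/
open Set Geometry

/-!
In the barycentric coordinates of a finite complex, consider the open sets cut out by finitely many,
but at least one, inequalities `a < x v` with thresholds `a ≥ 0`. They form a basis of the topology,
because two points with comparable coordinates are equal (both have total mass `1`), and they are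
visibly stable under finite intersections. When nonempty, such a set is star-shaped: the vertices
occurring in the inequalities span a face `σ` of every simplex that meets the set, and moving the
mass of a point of the set onto `σ` yields a point of `σ` that still satisfies the inequalities and
sees the whole set. An open cover of an open subset of a locally compact, second countable Hausdorff
space has a locally finite refinement by members of any given basis, and for the present basis every
such refinement is a good cover.
-/

open Topology

section GoodBasis

variable {X Y : Type*} [TopologicalSpace X] [TopologicalSpace Y]

/-- A good basis of a topological space: a basis of its topology that is stable under binary
intersections and whose nonempty members are contractible, so that every cover by its members is a
good cover. -/
structure IsGoodBasis (ℬ : Set (Set X)) : Prop where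
  isTopologicalBasis : TopologicalSpace.IsTopologicalBasis ℬ
  infClosed : InfClosed ℬ
  contractibleSpace : ∀ U ∈ ℬ, U.Nonempty → ContractibleSpace U

theorem IsGoodBasis.preimage_homeomorph {ℬ : Set (Set Y)} (hℬ : IsGoodBasis ℬ) (e : X ≃ₜ Y) :
    IsGoodBasis (preimage e '' ℬ) where
  isTopologicalBasis := hℬ.isTopologicalBasis.isInducing e.isInducing
  infClosed := by
    rintro _ ⟨U, hU, rfl⟩ _ ⟨V, hV, rfl⟩
    exact ⟨U ∩ V, hℬ.infClosed hU hV, preimage_inter⟩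
  contractibleSpace := by
    rintro _ ⟨U, hU, rfl⟩ ⟨x, hx⟩
    have := hℬ.contractibleSpace U hU ⟨e x, hx⟩
    exact (e.sets (s := e ⁻¹' U) (t := U) rfl).contractibleSpace

theorem IsGoodBasis.contractibleSpace_sInter {ℬ : Set (Set X)} (hℬ : IsGoodBasis ℬ)
    {t : Finset (Set X)} (htℬ : ↑t ⊆ ℬ) (ht : t.Nonempty) (hne : (⋂₀ (t : Set (Set X))).Nonempty) :
    ContractibleSpace ↥(⋂₀ (t : Set (Set X))) := by
  refine hℬ.contractibleSpace _ ?_ hne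
  rw [← sInf_eq_sInter, ← t.inf'_id_eq_csInf ht]
  exact hℬ.infClosed.finsetInf'_mem ht htℬ

theorem exists_locallyFinite_refinement_of_isTopologicalBasis [T2Space X] [LocallyCompactSpace X]
    [SecondCountableTopology X] {ℬ : Set (Set X)} (hℬ : TopologicalSpace.IsTopologicalBasis ℬ)
    {O : Set X} (hO : IsOpen O) {𝒱 : Set (Set X)} (h𝒱open : ∀ V ∈ 𝒱, IsOpen V)
    (h𝒱cov : O ⊆ ⋃₀ 𝒱) :
    ∃ 𝒰 ⊆ ℬ, (∀ U ∈ 𝒰, U ⊆ O) ∧ O ⊆ ⋃₀ 𝒰 ∧ (∀ U ∈ 𝒰, ∃ V ∈ 𝒱, U ⊆ V) ∧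
      ∀ y ∈ O, ∃ W, IsOpen W ∧ y ∈ W ∧ {U ∈ 𝒰 | (U ∩ W).Nonempty}.Finite := by
  have : LocallyCompactSpace O := hO.locallyCompactSpace
  have hbasis (x : O) : (𝓝 x).HasBasis
      (fun U ↦ (U ∈ ℬ ∧ x.1 ∈ U) ∧ U ⊆ O ∧ ∃ V ∈ 𝒱, U ⊆ V) (fun U ↦ Subtype.val ⁻¹' U) := by
    rw [nhds_subtype_eq_comap]
    refine (hℬ.nhds_hasBasis.restrict fun N ⟨hN, hxN⟩ ↦ ?_).comap _
    obtain ⟨V, hV, hxV⟩ := h𝒱cov x.2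
    obtain ⟨U, hU, hxU, hUsub⟩ := hℬ.exists_subset_of_mem_open
      (show x.1 ∈ N ∩ (O ∩ V) from ⟨hxN, x.2, hxV⟩)
      ((hℬ.isOpen hN).inter (hO.inter (h𝒱open V hV)))
    exact ⟨U, ⟨hU, hxU⟩, ⟨fun y hy ↦ (hUsub hy).2.1, V, hV, fun y hy ↦ (hUsub hy).2.2⟩,
      fun y hy ↦ (hUsub hy).1⟩
  obtain ⟨α, c, U, hU, hcov, hfin⟩ :=
    refinement_of_locallyCompact_sigmaCompact_of_nhds_basis hbasis
  refine ⟨range U, ?_, ?_, ?_, ?_, ?_⟩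
  · exact range_subset_iff.2 fun a ↦ (hU a).1.1
  · exact forall_mem_range.2 fun a ↦ (hU a).2.1
  · intro y hy
    obtain ⟨a, ha⟩ := iUnion_eq_univ_iff.1 hcov ⟨y, hy⟩
    exact ⟨U a, mem_range_self a, ha⟩
  · exact forall_mem_range.2 fun a ↦ (hU a).2.2
  · intro y hy
    obtain ⟨N, hN, hNfin⟩ := hfin ⟨y, hy⟩
    obtain ⟨W, hWN, hWopen, hyW⟩ := mem_nhds_iff.1 hN
    refine ⟨Subtype.val '' W, hO.isOpenMap_subtype_val W hWopen, ⟨_, hyW, rfl⟩, ?_⟩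
    refine (hNfin.image U).subset ?_
    rintro _ ⟨⟨a, rfl⟩, _, hzU, z, hzW, rfl⟩
    exact ⟨a, ⟨z, hzU, hWN hzW⟩, rfl⟩

end GoodBasis

section CoordSimplex

variable {ι : Type*} {s t : Finset ι} {x y : ι → ℝ}

/-- The simplex of `ℝ^ι` spanned by the basis vectors indexed by `s`, i.e. the set of possible
barycentric coordinates of a point of a simplex with vertex set `s`. -/
def coordSimplex (s : Finset ι) : Set (ι → ℝ) :=
  {x | 0 ≤ x ∧ (∀ v ∉ s, x v = 0) ∧ ∑ v ∈ s, x v = 1}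

theorem sum_eq_one_of_mem_coordSimplex (hx : x ∈ coordSimplex s) (hst : s ⊆ t) :
    ∑ v ∈ t, x v = 1 := by
  rw [← hx.2.2, Finset.sum_subset hst fun v _ hv ↦ hx.2.1 v hv]

theorem sum_le_one_of_mem_coordSimplex (hx : x ∈ coordSimplex s) (t : Finset ι) :
    ∑ v ∈ t, x v ≤ 1 := by
  classical
  rw [← sum_eq_one_of_mem_coordSimplex hx (Finset.subset_union_left (s₂ := t))]
  exact Finset.sum_le_sum_of_subset_of_nonneg Finset.subset_union_right fun v _ _ ↦ hx.1 v

theorem coordSimplex_mono (hst : s ⊆ t) : coordSimplex s ⊆ coordSimplex t := fun _ hx ↦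
  ⟨hx.1, fun v hv ↦ hx.2.1 v fun hvs ↦ hv (hst hvs), sum_eq_one_of_mem_coordSimplex hx hst⟩

theorem convex_coordSimplex (s : Finset ι) : Convex ℝ (coordSimplex s) := by
  rintro x ⟨hx₀, hxs, hx₁⟩ y ⟨hy₀, hys, hy₁⟩ a b ha hb hab
  refine ⟨add_nonneg (smul_nonneg ha hx₀) (smul_nonneg hb hy₀), fun v hv ↦ ?_, ?_⟩
  · simp [hxs v hv, hys v hv]
  · simp [Finset.sum_add_distrib, ← Finset.mul_sum, hx₁, hy₁, hab]

theorem isCompact_coordSimplex (s : Finset ι) : IsCompact (coordSimplex s) := by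
  refine isCompact_Icc.of_isClosed_subset (s := Icc 0 1) ?_ fun x hx ↦
    ⟨hx.1, fun v ↦ by simpa using sum_le_one_of_mem_coordSimplex hx {v}⟩
  simp only [coordSimplex, ofPred_and, ofPred_forall]
  exact isClosed_Ici.inter <| (isClosed_iInter fun v ↦ isClosed_iInter fun _ ↦
    isClosed_eq (continuous_apply v) continuous_const).inter
      (isClosed_eq (by fun_prop) continuous_const)

theorem eq_of_le_of_mem_coordSimplex (hx : x ∈ coordSimplex s) (hy : y ∈ coordSimplex t)
    (hxy : x ≤ y) : x = y := by
  classical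
  have hsum : ∑ v ∈ s ∪ t, x v = ∑ v ∈ s ∪ t, y v := by
    rw [sum_eq_one_of_mem_coordSimplex hx Finset.subset_union_left,
      sum_eq_one_of_mem_coordSimplex hy Finset.subset_union_right]
  funext v
  by_cases hv : v ∈ s ∪ t
  · exact (Finset.sum_eq_sum_iff_of_le fun w _ ↦ hxy w).1 hsum v hv
  · rw [Finset.mem_union, not_or] at hv
    rw [hx.2.1 v hv.1, hy.2.1 v hv.2]

theorem exists_mem_coordSimplex_forall_le (hx : x ∈ coordSimplex s) (ht : t.Nonempty) :
    ∃ p ∈ coordSimplex t, ∀ v ∈ t, x v ≤ p v := by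
  classical
  -- Spread the mass of `x` outside `t` evenly over `t`.
  let c : ℝ := (1 - ∑ v ∈ t, x v) / t.card
  have hc : 0 ≤ c :=
    div_nonneg (sub_nonneg.2 (sum_le_one_of_mem_coordSimplex hx t)) t.card.cast_nonneg
  refine ⟨fun v ↦ if v ∈ t then x v + c else 0, ⟨fun v ↦ ?_, fun v hv ↦ if_neg hv, ?_⟩,
    fun v hv ↦ ?_⟩
  · dsimp only
    split_ifs
    exacts [add_nonneg (hx.1 v) hc, le_rfl]
  · have hcard : (t.card : ℝ) ≠ 0 := Nat.cast_ne_zero.2 ht.card_ne_zero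
    rw [Finset.sum_congr rfl fun v hv ↦ if_pos hv, Finset.sum_add_distrib, Finset.sum_const,
      nsmul_eq_mul, mul_div_cancel₀ _ hcard, add_sub_cancel]
  · simpa only [if_pos hv] using le_add_of_nonneg_right hc

end CoordSimplex

section OpenOrthant

variable {ι : Type*}

/-- The set of points of `ℝ^ι` whose coordinates strictly exceed the finitely many thresholds in
`I`, where a pair `(v, a)` prescribes the nonnegative threshold `a` for the coordinate `v`. Several
thresholds may be given for the same coordinate, so that intersections correspond to unions. -/
def openOrthant (I : Finset (ι × NNReal)) : Set (ι → ℝ) :=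
  {x | ∀ c ∈ I, (c.2 : ℝ) < x c.1}

theorem openOrthant_union [DecidableEq ι] (I J : Finset (ι × NNReal)) :
    openOrthant (I ∪ J) = openOrthant I ∩ openOrthant J := by
  ext x
  simp only [openOrthant, Finset.mem_union, or_imp, forall_and, mem_ofPred_eq, mem_inter_iff]

theorem isOpen_openOrthant (I : Finset (ι × NNReal)) : IsOpen (openOrthant I) := by
  simp only [openOrthant, ofPred_forall]
  exact isOpen_biInter_finset fun c _ ↦ isOpen_lt continuous_const (continuous_apply c.1)

theorem convex_openOrthant (I : Finset (ι × NNReal)) : Convex ℝ (openOrthant I) := by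
  simp only [openOrthant, ofPred_forall]
  exact convex_iInter₂ fun c _ ↦ convex_halfSpace_gt (LinearMap.proj c.1).isLinear _

theorem subset_of_mem_coordSimplex_of_mem_openOrthant [DecidableEq ι] {s : Finset ι}
    {I : Finset (ι × NNReal)} {x : ι → ℝ} (hx : x ∈ coordSimplex s) (hxI : x ∈ openOrthant I) :
    I.image Prod.fst ⊆ s := by
  refine Finset.image_subset_iff.2 fun c hc ↦ ?_
  by_contra hcs
  exact (c.2.coe_nonneg.trans_lt (hxI c hc)).ne' (hx.2.1 c.1 hcs)

end OpenOrthant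

section Realization

variable {ι : Type*} {K : PreAbstractSimplicialComplex ι}

/-- The geometric realization of an abstract simplicial complex in terms of barycentric coordinates,
with the topology of pointwise convergence. This is the usual topology when `K` is finite. -/
def realization (K : PreAbstractSimplicialComplex ι) : Set (ι → ℝ) :=
  ⋃ s ∈ K.faces, coordSimplex s

theorem mem_realization_iff {x : ι → ℝ} :
    x ∈ realization K ↔ ∃ s ∈ K.faces, x ∈ coordSimplex s := by
  simp only [realization, mem_iUnion, exists_prop]

theorem isCompact_realization (hK : K.faces.Finite) : IsCompact (realization K) :=
  hK.isCompact_biUnion fun s _ ↦ isCompact_coordSimplex s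

theorem secondCountableTopology_realization (hK : K.faces.Finite) :
    SecondCountableTopology (realization K) := by
  have := isCompact_iff_compactSpace.1 (isCompact_realization hK)
  classical
  obtain ⟨T, hT⟩ := hK.bddAbove
  have hzero (x : realization K) {v : ι} (hv : v ∉ T) : x.1 v = 0 := by
    obtain ⟨s, hs, hx⟩ := mem_realization_iff.1 x.2
    exact hx.2.1 v fun hvs ↦ hv (hT hs hvs)
  let restrict (x : realization K) : T → ℝ := T.restrict x.1
  have hcont : Continuous restrict := by fun_prop
  have hinj : Function.Injective restrict := by
    intro x y hxy
    ext v
    by_cases hv : v ∈ T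
    · exact congrFun hxy ⟨v, hv⟩
    · rw [hzero x hv, hzero y hv]
  exact (hcont.isClosedEmbedding hinj).isEmbedding.secondCountableTopology

theorem starConvex_realization_inter_openOrthant [DecidableEq ι] {I : Finset (ι × NNReal)}
    {p : ι → ℝ} (hp : p ∈ coordSimplex (I.image Prod.fst)) (hpI : p ∈ openOrthant I) :
    StarConvex ℝ p (realization K ∩ openOrthant I) := by
  rintro y ⟨hyK, hyI⟩ a b ha hb hab
  obtain ⟨s, hs, hys⟩ := mem_realization_iff.1 hyK
  have hps : p ∈ coordSimplex s :=
    coordSimplex_mono (subset_of_mem_coordSimplex_of_mem_openOrthant hys hyI) hp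
  exact ⟨mem_realization_iff.2 ⟨s, hs, convex_coordSimplex s hps hys ha hb hab⟩,
    convex_openOrthant I hpI hyI ha hb hab⟩

theorem contractibleSpace_realization_inter_openOrthant {I : Finset (ι × NNReal)}
    (hI : I.Nonempty) (hne : (realization K ∩ openOrthant I).Nonempty) :
    ContractibleSpace ↥(realization K ∩ openOrthant I) := by
  classical
  obtain ⟨x, hxK, hxI⟩ := hne
  obtain ⟨s, -, hxs⟩ := mem_realization_iff.1 hxK
  obtain ⟨p, hp, hxp⟩ := exists_mem_coordSimplex_forall_le hxs (hI.image Prod.fst)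
  have hpI : p ∈ openOrthant I := fun c hc ↦
    (hxI c hc).trans_le (hxp c.1 (Finset.mem_image_of_mem _ hc))
  exact (starConvex_realization_inter_openOrthant hp hpI).contractibleSpace ⟨x, hxK, hxI⟩

/-- The open subsets of the realization of `K` cut out by finitely many, but at least one, strict
lower bounds on barycentric coordinates. With all thresholds `0` they are the open stars of the
simplices of `K`. -/
def orthantBasis (K : PreAbstractSimplicialComplex ι) : Set (Set (realization K)) :=
  (fun I ↦ Subtype.val ⁻¹' openOrthant I) '' {I | I.Nonempty}

theorem exists_mem_faces_forall_pos {x : ι → ℝ} (hx : x ∈ realization K) :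
    ∃ s ∈ K.faces, x ∈ coordSimplex s ∧ ∀ v ∈ s, 0 < x v := by
  obtain ⟨t, ht, hx₀, hxt, hx₁⟩ := mem_realization_iff.1 hx
  have hpos {v : ι} (hv : x v ≠ 0) : 0 < x v := (hx₀ v).lt_of_ne' hv
  have hsum : ∑ v ∈ t with x v ≠ 0, x v = 1 := by rw [Finset.sum_filter_ne_zero, hx₁]
  have hne : (t.filter fun v ↦ x v ≠ 0).Nonempty :=
    Finset.nonempty_of_sum_ne_zero (f := x) (hsum ▸ one_ne_zero)
  refine ⟨_, (K.isRelLowerSet_faces ht).2 (Finset.filter_subset _ _) hne,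
    ⟨hx₀, fun v hv ↦ ?_, hsum⟩, fun v hv ↦ hpos (Finset.mem_filter.1 hv).2⟩
  by_contra hxv
  exact hv (Finset.mem_filter.2 ⟨not_imp_comm.1 (hxt v) hxv, hxv⟩)

theorem exists_forall_sub_le_subset (hK : K.faces.Finite) {p : realization K} {s : Finset ι}
    (hp : p.1 ∈ coordSimplex s) {W : Set (realization K)} (hW : W ∈ 𝓝 p) :
    ∃ ε > 0, {x : realization K | ∀ v ∈ s, p.1 v - ε ≤ x.1 v} ⊆ W := by
  have := isCompact_iff_compactSpace.1 (isCompact_realization hK)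
  let D (ε : Ioi (0 : ℝ)) : Set (realization K) := {x | ∀ v ∈ s, p.1 v - ε ≤ x.1 v}
  have hDmono : Monotone D := fun ε δ hεδ x hx v hv ↦
    (sub_le_sub_left (Subtype.coe_le_coe.2 hεδ) _).trans (hx v hv)
  have hDcompact (ε : Ioi (0 : ℝ)) : IsCompact (D ε) := by
    simp only [D, ofPred_forall]
    refine IsClosed.isCompact (isClosed_iInter fun v ↦ isClosed_iInter fun _ ↦ ?_)
    exact isClosed_le continuous_const ((continuous_apply v).comp continuous_subtype_val)
  have hDinter (x : realization K) (hx : x ∈ ⋂ ε, D ε) : p = x := by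
    obtain ⟨t, -, hxt⟩ := mem_realization_iff.1 x.2
    refine Subtype.ext (eq_of_le_of_mem_coordSimplex hp hxt fun v ↦ ?_)
    by_cases hv : v ∈ s
    · exact le_of_forall_sub_le fun ε hε ↦ mem_iInter.1 hx ⟨ε, hε⟩ v hv
    · exact (hp.2.1 v hv).trans_le (hxt.1 v)
  obtain ⟨ε, hε⟩ := exists_subset_nhds_of_isCompact hDmono.directed_ge hDcompact
    fun x hx ↦ hDinter x hx ▸ hW
  exact ⟨ε, ε.2, hε⟩

theorem isTopologicalBasis_orthantBasis (hK : K.faces.Finite) :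
    TopologicalSpace.IsTopologicalBasis (orthantBasis K) := by
  classical
  refine TopologicalSpace.isTopologicalBasis_of_isOpen_of_nhds ?_ fun p W hpW hW ↦ ?_
  · rintro _ ⟨I, -, rfl⟩
    exact (isOpen_openOrthant I).preimage continuous_subtype_val
  obtain ⟨s, hs, hps, hpos⟩ := exists_mem_faces_forall_pos p.2
  obtain ⟨ε, hε, hεW⟩ := exists_forall_sub_le_subset hK hps (hW.mem_nhds hpW)
  let I : Finset (ι × NNReal) := s.image fun v ↦ (v, (p.1 v - ε).toNNReal)
  have hmem (x : ι → ℝ) : x ∈ openOrthant I ↔ ∀ v ∈ s, p.1 v - ε < x v ∧ 0 < x v := by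
    simp only [openOrthant, I, mem_ofPred_eq, Finset.forall_mem_image, Real.coe_toNNReal',
      max_lt_iff]
  refine ⟨_, ⟨I, (K.isRelLowerSet_faces hs).1.image _, rfl⟩, ?_, fun x hx ↦ hεW fun v hv ↦ ?_⟩
  · exact (hmem p.1).2 fun v hv ↦ ⟨sub_lt_self _ hε, hpos v hv⟩
  · exact ((hmem x.1).1 hx v hv).1.le

theorem isGoodBasis_orthantBasis (hK : K.faces.Finite) : IsGoodBasis (orthantBasis K) where
  isTopologicalBasis := isTopologicalBasis_orthantBasis hK
  infClosed := by
    classical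
    rintro _ ⟨I, hI, rfl⟩ _ ⟨J, -, rfl⟩
    refine ⟨I ∪ J, hI.mono Finset.subset_union_left, ?_⟩
    simp only [openOrthant_union, preimage_inter, inf_eq_inter]
  contractibleSpace := by
    rintro _ ⟨I, hI, rfl⟩ hne
    let U : Set (realization K) := Subtype.val ⁻¹' openOrthant I
    have himage : Subtype.val '' U = realization K ∩ openOrthant I :=
      Subtype.image_preimage_coe _ _
    have : ContractibleSpace ↥(Subtype.val '' U) := by
      have hne' := hne.image Subtype.val
      rw [himage] at hne' ⊢
      exact contractibleSpace_realization_inter_openOrthant hI hne'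
    exact (IsEmbedding.subtypeVal.homeomorphImage U).contractibleSpace

end Realization

section RealizationHomeomorph

variable {E : Type*} [AddCommGroup E] [Module ℝ E] {s T : Finset E}

/-- The point of `E` whose barycentric coordinates with respect to the vertices in `T` are given by
`x`; coordinates outside `T` are ignored. -/
def barycentricSum (T : Finset E) (x : E → ℝ) : E :=
  ∑ v ∈ T, x v • v

theorem barycentricSum_eq_of_mem_coordSimplex {x : E → ℝ} (hx : x ∈ coordSimplex s) (hsT : s ⊆ T) :
    barycentricSum T x = ∑ v ∈ s, x v • v :=
  (Finset.sum_subset hsT fun v _ hv ↦ by rw [hx.2.1 v hv, zero_smul]).symm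

theorem image_barycentricSum_coordSimplex (hsT : s ⊆ T) :
    barycentricSum T '' coordSimplex s = convexHull ℝ (s : Set E) := by
  classical
  ext q
  rw [Finset.mem_convexHull']
  constructor
  · rintro ⟨x, hx, rfl⟩
    exact ⟨x, fun v _ ↦ hx.1 v, hx.2.2, (barycentricSum_eq_of_mem_coordSimplex hx hsT).symm⟩
  · rintro ⟨w, hw₀, hw₁, rfl⟩
    let x : E → ℝ := fun v ↦ if v ∈ s then w v else 0
    have hxw : ∀ v ∈ s, x v = w v := fun v hv ↦ if_pos hv
    have hx : x ∈ coordSimplex s := by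
      refine ⟨fun v ↦ ?_, fun v hv ↦ if_neg hv, (Finset.sum_congr rfl hxw).trans hw₁⟩
      dsimp only [x]
      split_ifs with hv
      exacts [hw₀ v hv, le_rfl]
    refine ⟨x, hx, (barycentricSum_eq_of_mem_coordSimplex hx hsT).trans ?_⟩
    exact Finset.sum_congr rfl fun v hv ↦ by rw [hxw v hv]

theorem injOn_barycentricSum_coordSimplex (hs : AffineIndependent ℝ ((↑) : s → E)) (hsT : s ⊆ T) :
    InjOn (barycentricSum T) (coordSimplex s) := by
  intro x hx y hy hxy
  rw [barycentricSum_eq_of_mem_coordSimplex hx hsT,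
    barycentricSum_eq_of_mem_coordSimplex hy hsT] at hxy
  funext v
  by_cases hv : v ∈ s
  · exact hs.eq_of_sum_eq_sum_subtype (hx.2.2.trans hy.2.2.symm) hxy v hv
  · rw [hx.2.1 v hv, hy.2.1 v hv]

variable {P : SimplicialComplex ℝ E}

theorem image_barycentricSum_realization (hT : ∀ s ∈ P.faces, s ⊆ T) :
    barycentricSum T '' realization P.toPreAbstractSimplicialComplex = P.space := by
  rw [realization, image_iUnion₂]
  exact iUnion₂_congr fun s hs ↦ image_barycentricSum_coordSimplex (hT s hs)

theorem injOn_barycentricSum_realization (hT : ∀ s ∈ P.faces, s ⊆ T) :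
    InjOn (barycentricSum T) (realization P.toPreAbstractSimplicialComplex) := by
  classical
  intro x hx y hy hxy
  obtain ⟨s, hs, hxs⟩ := mem_realization_iff.1 hx
  obtain ⟨t, ht, hyt⟩ := mem_realization_iff.1 hy
  have hmem : barycentricSum T x ∈ convexHull ℝ ((s ∩ t : Finset E) : Set E) := by
    rw [Finset.coe_inter]
    refine P.inter_subset_convexHull hs ht ⟨?_, ?_⟩
    · exact image_barycentricSum_coordSimplex (hT s hs) ▸ mem_image_of_mem _ hxs
    · exact image_barycentricSum_coordSimplex (hT t ht) ▸ hxy ▸ mem_image_of_mem _ hyt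
  rw [← image_barycentricSum_coordSimplex (Finset.inter_subset_left.trans (hT s hs))] at hmem
  obtain ⟨z, hz, hzx⟩ := hmem
  have hxz : x = z := injOn_barycentricSum_coordSimplex (P.indep hs) (hT s hs) hxs
    (coordSimplex_mono Finset.inter_subset_left hz) hzx.symm
  have hyz : y = z := injOn_barycentricSum_coordSimplex (P.indep ht) (hT t ht) hyt
    (coordSimplex_mono Finset.inter_subset_right hz) (hxy.symm.trans hzx.symm)
  exact hxz.trans hyz.symm

variable [TopologicalSpace E] [ContinuousAdd E] [ContinuousSMul ℝ E]

theorem continuous_barycentricSum (T : Finset E) : Continuous (barycentricSum T) := by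
  unfold barycentricSum
  fun_prop

theorem nonempty_realization_homeomorph_space [T2Space E] (hP : P.faces.Finite) :
    Nonempty (realization P.toPreAbstractSimplicialComplex ≃ₜ P.space) := by
  classical
  have := isCompact_iff_compactSpace.1 (isCompact_realization hP)
  obtain ⟨T, hT⟩ := hP.bddAbove
  have hembedding : IsClosedEmbedding
      ((realization P.toPreAbstractSimplicialComplex).domRestrict (barycentricSum T)) :=
    ((continuous_barycentricSum T).comp continuous_subtype_val).isClosedEmbedding
      (injOn_iff_injective.1 (injOn_barycentricSum_realization hT))
  have hrange :=
    range_domRestrict (barycentricSum T) (realization P.toPreAbstractSimplicialComplex)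
  exact ⟨hembedding.isEmbedding.toHomeomorph.trans
    (.setCongr (hrange.trans (image_barycentricSum_realization hT)))⟩

end RealizationHomeomorph

theorem good_cover_refinement_general
    {E : Type*} [AddCommGroup E] [Module ℝ E] [TopologicalSpace E] [ContinuousAdd E]
    [ContinuousSMul ℝ E] [T2Space E] {P : SimplicialComplex ℝ E} (hP : P.faces.Finite)
    {Y : Type*} [TopologicalSpace Y] (e : Y ≃ₜ P.space)
    {O : Set Y} (hO : IsOpen O)
    {𝒱 : Set (Set Y)} (h𝒱open : ∀ V ∈ 𝒱, IsOpen V) (h𝒱cov : O ⊆ ⋃₀ 𝒱) :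
    ∃ 𝒰 : Set (Set Y),
      (∀ U ∈ 𝒰, IsOpen U ∧ U ⊆ O) ∧
      O ⊆ ⋃₀ 𝒰 ∧
      (∀ U ∈ 𝒰, ∃ V ∈ 𝒱, U ⊆ V) ∧
      (∀ y ∈ O, ∃ W, IsOpen W ∧ y ∈ W ∧ {U ∈ 𝒰 | (U ∩ W).Nonempty}.Finite) ∧
      (∀ t : Finset (Set Y), ↑t ⊆ 𝒰 → t.Nonempty → (⋂₀ (↑t : Set (Set Y))).Nonempty →
        ContractibleSpace ↥(⋂₀ (↑t : Set (Set Y)))) := by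
  obtain ⟨r⟩ := nonempty_realization_homeomorph_space hP
  let f := e.trans r.symm
  have := isCompact_iff_compactSpace.1 (isCompact_realization hP)
  have := secondCountableTopology_realization hP
  have : CompactSpace Y := f.symm.compactSpace
  have : T2Space Y := f.isEmbedding.t2Space
  have : SecondCountableTopology Y := f.isEmbedding.secondCountableTopology
  have hgood := (isGoodBasis_orthantBasis hP).preimage_homeomorph f
  obtain ⟨𝒰, h𝒰, hsub, hcov, href, hfin⟩ := exists_locallyFinite_refinement_of_isTopologicalBasis
    hgood.isTopologicalBasis hO h𝒱open h𝒱cov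
  exact ⟨𝒰, fun U hU ↦ ⟨hgood.isTopologicalBasis.isOpen (h𝒰 hU), hsub U hU⟩, hcov, href, hfin,
    fun t ht ↦ hgood.contractibleSpace_sInter (ht.trans h𝒰)⟩

/-- Let `Y` be a triangulable space (a compact topological space homeomorphic to
the geometric realization of a finite simplicial complex in some `ℝⁿ`) and let `O ⊆ Y` be open.
Then every open cover `𝒱` of `O` has a refinement `𝒰` which is an open cover of `O`, is
locally finite in `O`, and is a good cover of `O` (every nonempty intersection of finitely
many members of `𝒰` is contractible). -/
theorem good_cover_refinement
    {Y : Type} [TopologicalSpace Y] [CompactSpace Y]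
    (htri : ∃ (n : ℕ) (P : Geometry.SimplicialComplex ℝ (Fin n → ℝ)),
      P.faces.Finite ∧ Nonempty (Y ≃ₜ ↥P.space))
    (O : Set Y) (hO : IsOpen O)
    (𝒱 : Set (Set Y)) (h𝒱open : ∀ V ∈ 𝒱, IsOpen V ∧ V ⊆ O) (h𝒱cov : O ⊆ ⋃₀ 𝒱) :
    ∃ 𝒰 : Set (Set Y),
      (∀ U ∈ 𝒰, IsOpen U ∧ U ⊆ O) ∧
      O ⊆ ⋃₀ 𝒰 ∧
      (∀ U ∈ 𝒰, ∃ V ∈ 𝒱, U ⊆ V) ∧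
      (∀ y ∈ O, ∃ W, IsOpen W ∧ y ∈ W ∧ {U ∈ 𝒰 | (U ∩ W).Nonempty}.Finite) ∧
      (∀ t : Finset (Set Y), ↑t ⊆ 𝒰 → t.Nonempty → (⋂₀ (↑t : Set (Set Y))).Nonempty →
        ContractibleSpace ↥(⋂₀ (↑t : Set (Set Y)))) := by
  obtain ⟨n, P, hP, ⟨e⟩⟩ := htri
  exact good_cover_refinement_general hP e hO (fun V hV ↦ (h𝒱open V hV).1) h𝒱cov
end

section
/- Let Y be a topological space and 𝒰 a locally finite good open cover of Y. Let P be a finite simplicial complex in ℝⁿ and let f, g : |P| → Y be continuous maps which are 𝒰-close. Then f and g are homotopic. -/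
open Set Geometry

/-!
Only finitely many members `U i` of the cover are needed to witness closeness, since the domain `X`
is compact. The sets `{(t, x) | f x ∈ U i ∧ g x ∈ U i}` cover `[0, 1] × X`; shrink them to closed
sets `A i`. It suffices to extend the map given by `f` near `t = 0` and by `g` near `t = 1` to the
whole cylinder, keeping the image of every `A i` inside `U i`. Extend it over the intersections
`⋂ i ∈ S, A i` one at a time, larger `S` first: the map is then already defined near the part of
the intersection meeting some further `A j`, and the contractibility of the open set
`⋂ i ∈ S, U i` provides the extension over the rest.
-/

section

open Filter
open scoped Topology unitInterval

variable {X Y Z ι : Type*} [TopologicalSpace X] [TopologicalSpace Y] [TopologicalSpace Z]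

theorem exists_continuous_unitInterval_zero_one_nhds_of_isClosed [NormalSpace Z] {s t : Set Z}
    (hs : IsClosed s) (ht : IsClosed t) (hd : Disjoint s t) :
    ∃ u : C(Z, I), (∀ᶠ x in 𝓝ˢ s, u x = 0) ∧ ∀ᶠ x in 𝓝ˢ t, u x = 1 := by
  obtain ⟨V, hV, hsV, hVt⟩ := normal_exists_closure_subset hs ht.isOpen_compl
    hd.subset_compl_right
  obtain ⟨W, hW, htW, hWV⟩ := normal_exists_closure_subset ht isClosed_closure.isOpen_compl
    (subset_compl_comm.mp hVt)
  obtain ⟨v, hv0, hv1, hv⟩ := exists_continuous_zero_one_of_isClosed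
    (isClosed_closure (s := V)) (isClosed_closure (s := W))
    (subset_compl_iff_disjoint_left.mp hWV)
  refine ⟨⟨fun x ↦ ⟨v x, hv x⟩, by fun_prop⟩, ?_, ?_⟩
  · filter_upwards [hV.mem_nhdsSet.2 hsV] with x hx using Subtype.ext (hv0 (subset_closure hx))
  · filter_upwards [hW.mem_nhdsSet.2 htW] with x hx using Subtype.ext (hv1 (subset_closure hx))

theorem exists_eventuallyEq_nhdsSet_of_separatedNhds {α : Type*} {s t : Set Z}
    (h : SeparatedNhds s t) (φ₀ φ₁ : Z → α) :
    ∃ φ : Z → α, φ =ᶠ[𝓝ˢ s] φ₀ ∧ φ =ᶠ[𝓝ˢ t] φ₁ := by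
  classical
  obtain ⟨V, W, hV, hW, hsV, htW, hVW⟩ := h
  refine ⟨V.piecewise φ₀ φ₁, ?_, ?_⟩
  · filter_upwards [hV.mem_nhdsSet.2 hsV] with x hx using V.piecewise_eq_of_mem _ _ hx
  · filter_upwards [hW.mem_nhdsSet.2 htW] with x hx
    exact V.piecewise_eq_of_notMem _ _ (hVW.notMem_of_mem_right hx)

/- The contraction is made total so that composites with it need no membership proofs. Outside `C`
it is the identity with a jump to `c` at time `1`; only its two endpoints are used there. -/
theorem exists_contraction_of_contractibleSpace (C : Set Y) [ContractibleSpace C] :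
    ∃ K : I × Y → Y, ∃ c ∈ C, (∀ y, K (0, y) = y) ∧ (∀ y, K (1, y) = c) ∧
      MapsTo K (univ ×ˢ C) C ∧ ContinuousOn K (univ ×ˢ C) := by
  classical
  obtain ⟨c, ⟨H⟩⟩ := id_nullhomotopic C
  let K : I × Y → Y := fun p ↦
    if h : p.2 ∈ C then H (p.1, ⟨p.2, h⟩) else if p.1 = 1 then c else p.2
  have hKC : ∀ p : I × Y, ∀ h : p.2 ∈ C, K p = H (p.1, ⟨p.2, h⟩) := fun p h ↦ dif_pos h
  refine ⟨K, c, c.2, fun y ↦ ?_, fun y ↦ ?_, fun p hp ↦ ?_, ?_⟩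
  · by_cases h : y ∈ C <;> simp [K, h]
  · by_cases h : y ∈ C <;> simp [K, h]
  · rw [hKC p hp.2]
    exact Subtype.coe_prop _
  · rw [continuousOn_iff_continuous_domRestrict]
    have hH : Continuous fun p : ↥(univ ×ˢ C : Set (I × Y)) ↦ (H (p.1.1, ⟨p.1.2, p.2.2⟩) : Y) := by
      fun_prop
    exact hH.congr fun p ↦ (hKC p.1 p.2.2).symm

theorem exists_eventuallyEq_extension_of_contractibleSpace [NormalSpace Z] {B D : Set Z}
    (hB : IsClosed B) {C : Set Y} (hC : IsOpen C) [ContractibleSpace C] {φ : Z → Y}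
    (hφ : ∀ᶠ x in 𝓝ˢ B, ContinuousAt φ x ∧ (x ∈ D → φ x ∈ C)) :
    ∃ ψ : Z → Y, ψ =ᶠ[𝓝ˢ B] φ ∧ ∀ᶠ x in 𝓝ˢ D, ContinuousAt ψ x ∧ ψ x ∈ C := by
  obtain ⟨N, hN, hBN, hφN⟩ := eventually_nhdsSet_iff_exists.1 hφ
  obtain ⟨K, c, hc, hK0, hK1, hKC, hK⟩ := exists_contraction_of_contractibleSpace C
  obtain ⟨u, hu0, hu1⟩ := exists_continuous_unitInterval_zero_one_nhds_of_isClosed hB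
    hN.isClosed_compl (disjoint_compl_right.mono_left hBN)
  -- The contraction is run to its end before `x` leaves `N`, so the values of `φ` off `N` drop out.
  refine ⟨fun x ↦ K (u x, φ x), hu0.mono fun x hx ↦ by simp only [hx, hK0],
    eventually_nhdsSet_iff_forall.2 fun x hxD ↦ ?_⟩
  by_cases hxN : x ∈ N
  · filter_upwards [hN.mem_nhds hxN,
      (hφN x hxN).1.preimage_mem_nhds (hC.mem_nhds ((hφN x hxN).2 hxD))] with y hyN hyC
    have hK_at : ContinuousAt K (u y, φ y) :=
      hK.continuousAt ((isOpen_univ.prod hC).mem_nhds ⟨mem_univ _, hyC⟩)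
    exact ⟨hK_at.comp (f := fun z ↦ (u z, φ z)) (u.continuousAt y |>.prodMk (hφN y hyN).1),
      hKC ⟨mem_univ _, hyC⟩⟩
  · filter_upwards [(eventually_nhdsSet_iff_forall.1 hu1 x hxN).eventually_nhds] with y hy
    have hconst : (fun z ↦ K (u z, φ z)) =ᶠ[𝓝 y] fun _ ↦ c :=
      hy.mono fun z hz ↦ by simp only [hz, hK1]
    exact ⟨continuousAt_const.congr hconst.symm, hconst.eq_of_nhds ▸ hc⟩

/-- `φ` solves, on a neighbourhood of `B`, the problem of finding a continuous map which is carried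
by the assignment `A i ↦ U i`, that is, which sends each `A i` into `U i`. The values of `φ` away
from `B` are irrelevant, so that germs along `B` of solutions are represented by total functions. -/
def IsCarriedNear (A : ι → Set Z) (U : ι → Set Y) (B : Set Z) (φ : Z → Y) : Prop :=
  ∀ᶠ x in 𝓝ˢ B, ContinuousAt φ x ∧ ∀ i, x ∈ A i → φ x ∈ U i

namespace IsCarriedNear

variable {A : ι → Set Z} {U : ι → Set Y} {B B' : Set Z} {φ ψ : Z → Y}

theorem of_continuous (hφ : Continuous φ) (hφU : ∀ i, MapsTo φ (A i) (U i)) :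
    IsCarriedNear A U B φ :=
  .of_forall fun _ ↦ ⟨hφ.continuousAt, fun i hx ↦ hφU i hx⟩

theorem congr (hφ : IsCarriedNear A U B φ) (h : ψ =ᶠ[𝓝ˢ B] φ) : IsCarriedNear A U B ψ := by
  filter_upwards [hφ, h.eventually_nhdsSet] with x hx (hψφ : ψ =ᶠ[𝓝 x] φ)
  exact ⟨hx.1.congr hψφ.symm, hψφ.eq_of_nhds ▸ hx.2⟩

theorem union (h : IsCarriedNear A U B φ) (h' : IsCarriedNear A U B' φ) :
    IsCarriedNear A U (B ∪ B') φ :=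
  Filter.Eventually.union_nhdsSet.2 ⟨h, h'⟩

theorem continuous (h : IsCarriedNear A U univ φ) : Continuous φ :=
  continuous_iff_continuousAt.2 fun x ↦ (h.self_of_nhdsSet x (mem_univ x)).1

variable [NormalSpace Z] [Finite ι]

theorem exists_extension_biInter (hφ : IsCarriedNear A U B φ) (hA : ∀ i, IsClosed (A i))
    (hU : ∀ i, IsOpen (U i)) (hB : IsClosed B) (S : Finset ι)
    (hS : ∀ i ∉ S, A i ∩ ⋂ j ∈ S, A j ⊆ B)
    (hC : (⋂ i ∈ S, A i).Nonempty → ContractibleSpace ↥(⋂ i ∈ S, U i)) :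
    ∃ ψ : Z → Y, ψ =ᶠ[𝓝ˢ B] φ ∧ IsCarriedNear A U (B ∪ ⋂ i ∈ S, A i) ψ := by
  rcases (⋂ i ∈ S, A i).eq_empty_or_nonempty with hempty | hne
  · exact ⟨φ, .rfl, by rwa [hempty, union_empty]⟩
  have := hC hne
  have hφS : ∀ᶠ x in 𝓝ˢ B, ContinuousAt φ x ∧ (x ∈ ⋂ i ∈ S, A i → φ x ∈ ⋂ i ∈ S, U i) :=
    hφ.mono fun x hx ↦ ⟨hx.1, fun hxS ↦ mem_iInter₂.2 fun i hi ↦ hx.2 i (mem_iInter₂.1 hxS i hi)⟩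
  obtain ⟨ψ, hψφ, hψ⟩ := exists_eventuallyEq_extension_of_contractibleSpace hB
    (S.finite_toSet.isOpen_biInter fun i _ ↦ hU i) hφS
  have hψB : IsCarriedNear A U B ψ := hφ.congr hψφ
  refine ⟨ψ, hψφ, hψB.union (eventually_nhdsSet_iff_forall.2 fun x hx ↦ ?_)⟩
  by_cases hxB : x ∈ B
  · exact eventually_nhdsSet_iff_forall.1 hψB x hxB
  have hfar : ∀ᶠ y in 𝓝 x, ∀ i ∉ S, y ∉ A i :=
    eventually_all.2 fun i ↦ eventually_imp_distrib_left.2 fun hi ↦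
      (hA i).isOpen_compl.mem_nhds fun hxi ↦ hxB (hS i hi ⟨hxi, hx⟩)
  filter_upwards [eventually_nhdsSet_iff_forall.1 hψ x hx, hfar] with y hy hyfar
  exact ⟨hy.1, fun i hyi ↦ mem_iInter₂.1 hy.2 i (not_imp_not.1 (hyfar i) hyi)⟩

theorem exists_extension_biUnion_biInter (hφ : IsCarriedNear A U B φ) (hA : ∀ i, IsClosed (A i))
    (hU : ∀ i, IsOpen (U i)) (hB : IsClosed B) (𝒯 : Finset (Finset ι))
    (h𝒯 : IsUpperSet (𝒯 : Set (Finset ι)))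
    (hC : ∀ S ∈ 𝒯, (⋂ i ∈ S, A i).Nonempty → ContractibleSpace ↥(⋂ i ∈ S, U i)) :
    ∃ ψ : Z → Y, ψ =ᶠ[𝓝ˢ B] φ ∧ IsCarriedNear A U (B ∪ ⋃ S ∈ 𝒯, ⋂ i ∈ S, A i) ψ := by
  classical
  induction 𝒯 using Finset.strongInduction with
  | H 𝒯 ih =>
    rcases 𝒯.eq_empty_or_nonempty with rfl | hne
    · exact ⟨φ, .rfl, by simpa using hφ⟩
    obtain ⟨S, hS𝒯, hSmin⟩ := 𝒯.exists_minimal hne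
    have herase : IsUpperSet (𝒯.erase S : Set (Finset ι)) := by
      rw [Finset.coe_erase]
      exact h𝒯.erase fun T hT hTS ↦ hTS.antisymm (hSmin hT hTS)
    obtain ⟨ψ, hψφ, hψ⟩ := ih _ (Finset.erase_ssubset hS𝒯) herase
      fun T hT ↦ hC T (Finset.mem_of_mem_erase hT)
    have hclosed : IsClosed (B ∪ ⋃ T ∈ 𝒯.erase S, ⋂ i ∈ T, A i) :=
      hB.union ((𝒯.erase S).finite_toSet.isClosed_biUnion fun T _ ↦
        isClosed_biInter fun i _ ↦ hA i)
    have hoverlap : ∀ i ∉ S, A i ∩ ⋂ j ∈ S, A j ⊆ B ∪ ⋃ T ∈ 𝒯.erase S, ⋂ j ∈ T, A j := by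
      intro i hi
      have hinsert : insert i S ∈ 𝒯.erase S := Finset.mem_erase.2
        ⟨Finset.insert_ne_self.2 hi, h𝒯 (Finset.subset_insert i S) hS𝒯⟩
      rw [← Finset.set_biInter_insert]
      exact (subset_biUnion_of_mem (u := fun T : Finset ι ↦ ⋂ j ∈ T, A j) hinsert).trans
        subset_union_right
    obtain ⟨χ, hχψ, hχ⟩ := hψ.exists_extension_biInter hA hU hclosed S hoverlap (hC S hS𝒯)
    refine ⟨χ, (hχψ.filter_mono (nhdsSet_mono subset_union_left)).trans hψφ, ?_⟩
    rwa [← Finset.insert_erase hS𝒯, Finset.set_biUnion_insert, union_comm (⋂ i ∈ S, A i),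
      ← union_assoc]

theorem exists_extension_univ (hφ : IsCarriedNear A U B φ) (hA : ∀ i, IsClosed (A i))
    (hU : ∀ i, IsOpen (U i)) (hB : IsClosed B) (hcov : ⋃ i, A i = univ)
    (hC : ∀ S : Finset ι, S.Nonempty → (⋂ i ∈ S, A i).Nonempty →
      ContractibleSpace ↥(⋂ i ∈ S, U i)) :
    ∃ ψ : Z → Y, ψ =ᶠ[𝓝ˢ B] φ ∧ IsCarriedNear A U univ ψ := by
  have := Fintype.ofFinite ι
  let 𝒯 : Finset (Finset ι) := {S | S.Nonempty}
  have h𝒯 : IsUpperSet (𝒯 : Set (Finset ι)) := fun S T hST hS ↦ by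
    simp only [𝒯, Finset.coe_filter, Finset.mem_univ, true_and, mem_ofPred_eq] at hS ⊢
    exact hS.mono hST
  obtain ⟨ψ, hψφ, hψ⟩ := hφ.exists_extension_biUnion_biInter hA hU hB 𝒯 h𝒯
    fun S hS ↦ hC S (Finset.mem_filter.1 hS).2
  have hB𝒯 : B ∪ ⋃ S ∈ 𝒯, ⋂ i ∈ S, A i = univ := by
    refine eq_univ_of_univ_subset (hcov ▸ iUnion_subset fun i x hx ↦ Or.inr ?_)
    exact mem_biUnion (x := {i}) (by simp [𝒯]) (by simpa using hx)
  exact ⟨ψ, hψφ, hB𝒯 ▸ hψ⟩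

end IsCarriedNear

theorem homotopic_of_finite_good_family [NormalSpace (I × X)] [Finite ι] {U : ι → Set Y}
    (hU : ∀ i, IsOpen (U i))
    (hC : ∀ S : Finset ι, S.Nonempty → (⋂ i ∈ S, U i).Nonempty →
      ContractibleSpace ↥(⋂ i ∈ S, U i))
    {f g : C(X, Y)} (hfg : ∀ x, ∃ i, f x ∈ U i ∧ g x ∈ U i) : f.Homotopic g := by
  obtain ⟨A, hAcov, hA, hAU⟩ := exists_iUnion_eq_closed_subset
    (u := fun i ↦ {p : I × X | f p.2 ∈ U i ∧ g p.2 ∈ U i})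
    (fun i ↦ ((hU i).preimage (by fun_prop)).inter ((hU i).preimage (by fun_prop)))
    (fun _ ↦ toFinite _) (iUnion_eq_univ_iff.2 fun p ↦ hfg p.2)
  let B (a : I) : Set (I × X) := Prod.fst ⁻¹' {a}
  have hB (a : I) : IsClosed (B a) := isClosed_singleton.preimage continuous_fst
  have hdisj : Disjoint (B 0) (B 1) := (disjoint_singleton.2 zero_ne_one).preimage Prod.fst
  obtain ⟨φ, hφf, hφg⟩ := exists_eventuallyEq_nhdsSet_of_separatedNhds
    (normal_separation (hB 0) (hB 1) hdisj) (fun p ↦ f p.2) (fun p ↦ g p.2)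
  have hφ : IsCarriedNear A U (B 0 ∪ B 1) φ :=
    ((IsCarriedNear.of_continuous (by fun_prop) fun i _ hp ↦ (hAU i hp).1).congr hφf).union
      ((IsCarriedNear.of_continuous (by fun_prop) fun i _ hp ↦ (hAU i hp).2).congr hφg)
  obtain ⟨ψ, hψφ, hψ⟩ := hφ.exists_extension_univ hA hU ((hB 0).union (hB 1)) hAcov
    fun S hS ⟨p, hp⟩ ↦ hC S hS
      ⟨f p.2, mem_iInter₂.2 fun i hi ↦ (hAU i (mem_iInter₂.1 hp i hi)).1⟩
  have hψf : EqOn ψ (fun p ↦ f p.2) (B 0) :=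
    ((hψφ.filter_mono (nhdsSet_mono subset_union_left)).trans hφf).self_of_nhdsSet
  have hψg : EqOn ψ (fun p ↦ g p.2) (B 1) :=
    ((hψφ.filter_mono (nhdsSet_mono subset_union_right)).trans hφg).self_of_nhdsSet
  exact ⟨⟨⟨ψ, hψ.continuous⟩, fun x ↦ hψf (x := (0, x)) rfl, fun x ↦ hψg (x := (1, x)) rfl⟩⟩

theorem close_maps_homotopic_general [CompactSpace X] [R1Space X] (𝒰 : Set (Set Y))
    (hopen : ∀ U ∈ 𝒰, IsOpen U)
    (hgood : ∀ t : Finset (Set Y), ↑t ⊆ 𝒰 → t.Nonempty → (⋂₀ (↑t : Set (Set Y))).Nonempty →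
      ContractibleSpace ↥(⋂₀ (↑t : Set (Set Y))))
    (f g : C(X, Y)) (hclose : ∀ x, ∃ U ∈ 𝒰, f x ∈ U ∧ g x ∈ U) : f.Homotopic g := by
  classical
  obtain ⟨𝒱, h𝒱𝒰, h𝒱, hcov⟩ := isCompact_univ.elim_finite_subcover_image
    (b := 𝒰) (c := fun U ↦ {x : X | f x ∈ U ∧ g x ∈ U})
    (fun U hU ↦ ((hopen U hU).preimage f.continuous).inter ((hopen U hU).preimage g.continuous))
    fun x _ ↦ by
      obtain ⟨U, hU, hx⟩ := hclose x
      exact mem_biUnion hU hx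
  have : Finite 𝒱 := h𝒱
  refine homotopic_of_finite_good_family (U := fun V : 𝒱 ↦ (V : Set Y))
    (fun V ↦ hopen V (h𝒱𝒰 V.2)) (fun S hS hne ↦ ?_) fun x ↦ ?_
  · have hinter : ⋂ V ∈ S, (V : Set Y) = ⋂₀ ↑(S.image Subtype.val) := by
      simp only [Finset.coe_image, sInter_image, Finset.mem_coe]
    rw [hinter] at hne ⊢
    have hS𝒰 : (S.image Subtype.val : Set (Set Y)) ⊆ 𝒰 := by
      rw [Finset.coe_image, image_subset_iff]
      exact fun V _ ↦ h𝒱𝒰 V.2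
    exact hgood _ hS𝒰 (hS.image _) hne
  · obtain ⟨V, hV, hx⟩ := mem_iUnion₂.1 (hcov (mem_univ x))
    exact ⟨⟨V, hV⟩, hx⟩

theorem isCompact_space_of_finite_faces {E : Type*} [AddCommGroup E] [Module ℝ E]
    [TopologicalSpace E] [IsTopologicalAddGroup E] [ContinuousSMul ℝ E]
    {P : SimplicialComplex ℝ E} (hP : P.faces.Finite) : IsCompact P.space :=
  hP.isCompact_biUnion fun s _ ↦ s.finite_toSet.isCompact_convexHull ℝ

end

/-- Let `Y` be a topological space and `𝒰` a locally finite good open cover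
of `Y`. Let `P` be a finite simplicial complex in `ℝⁿ` and let `f, g : |P| → Y` be
continuous maps which are `𝒰`-close. Then `f` and `g` are homotopic. -/
theorem close_maps_homotopic
    {n : ℕ} {Y : Type} [TopologicalSpace Y]
    (𝒰 : Set (Set Y)) (hopen : ∀ U ∈ 𝒰, IsOpen U) (hcov : ⋃₀ 𝒰 = Set.univ)
    (hlf : ∀ y : Y, ∃ W, IsOpen W ∧ y ∈ W ∧ {U ∈ 𝒰 | (U ∩ W).Nonempty}.Finite)
    (hgood : ∀ t : Finset (Set Y), ↑t ⊆ 𝒰 → t.Nonempty → (⋂₀ (↑t : Set (Set Y))).Nonempty →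
      ContractibleSpace ↥(⋂₀ (↑t : Set (Set Y))))
    (P : Geometry.SimplicialComplex ℝ (Fin n → ℝ)) (hP : P.faces.Finite)
    (f g : C(↥P.space, Y))
    (hclose : ∀ z : ↥P.space, ∃ U ∈ 𝒰, f z ∈ U ∧ g z ∈ U) :
    ContinuousMap.Homotopic f g := by
  have : CompactSpace P.space := isCompact_iff_compactSpace.1 (isCompact_space_of_finite_faces hP)
  exact close_maps_homotopic_general 𝒰 hopen hgood f g hclose
end

section
/- Let P be a simplicial complex in ℝⁿ and let x, y ∈ |P|. If the intersection St(x,P) ∩ St(y,P) of the open stars of x and y is nonempty, then there exists z ∈ |P| such that St(x,P) ∩ St(y,P) = St(z,P). -/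
open Set Geometry

/-- The open simplex spanned by a finite set `s`: convex combinations of the points of `s`
with all coefficients strictly positive. -/
def openSimplex {n : ℕ} (s : Finset (Fin n → ℝ)) : Set (Fin n → ℝ) :=
  {x | ∃ w : (Fin n → ℝ) → ℝ, (∀ v ∈ s, 0 < w v) ∧
    (∑ v ∈ s, w v) = 1 ∧ (∑ v ∈ s, w v • v) = x}

/-- The open star of a point `x` with respect to a simplicial complex `P`: the union of the
open simplexes of all faces of `P` whose convex hull (closure) contains `x`. -/
def openStar {n : ℕ} (P : Geometry.SimplicialComplex ℝ (Fin n → ℝ))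
    (x : Fin n → ℝ) : Set (Fin n → ℝ) :=
  ⋃ s ∈ {s ∈ P.faces | x ∈ convexHull ℝ (s : Set (Fin n → ℝ))}, openSimplex s

/-!
Every point of `|P|` lies in the open simplex of exactly one face, its carrier, and the carrier is
contained in every face whose convex hull contains the point. Hence `St(x, P)` depends only on the
carrier `s` of `x`: it is the union of the open simplexes of the faces containing `s`. If `s` and
`t` are the carriers of `x` and `y`, then `St(x, P) ∩ St(y, P)` is the union of the open simplexes
of the faces containing `s ∪ t`. When it is nonempty, `s ∪ t` is a face, and any point of its open
simplex serves as `z`.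
-/

lemma weight_eq_zero_of_sum_smul_mem_convexHull {𝕜 E : Type*} [Field 𝕜] [LinearOrder 𝕜]
    [IsStrictOrderedRing 𝕜] [AddCommGroup E] [Module 𝕜 E] {s t : Finset E} {w : E → 𝕜}
    (hs : AffineIndependent 𝕜 ((↑) : s → E)) (hts : t ⊆ s) (hw : ∑ v ∈ s, w v = 1)
    (hmem : ∑ v ∈ s, w v • v ∈ convexHull 𝕜 (t : Set E)) {v : E} (hv : v ∈ s) (hvt : v ∉ t) :
    w v = 0 := by
  obtain ⟨w', -, hw', hcomb⟩ := Finset.mem_convexHull'.1 hmem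
  have hsum : ∑ u ∈ s, w u = ∑ u ∈ s, (t : Set E).indicator w' u := by
    rw [hw, Finset.sum_indicator_subset w' hts, hw']
  have hsmul : ∑ u ∈ s, w u • u = ∑ u ∈ s, (t : Set E).indicator w' u • u := by
    rw [← hcomb]
    exact (Finset.sum_indicator_subset_of_eq_zero w' (fun u a ↦ a • u) hts (zero_smul 𝕜)).symm
  rw [hs.eq_of_sum_eq_sum_subtype hsum hsmul v hv, indicator_of_notMem (by simpa using hvt)]

section OpenSimplex

variable {n : ℕ} {s t : Finset (Fin n → ℝ)} {x : Fin n → ℝ}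

lemma openSimplex_subset_convexHull (s : Finset (Fin n → ℝ)) :
    openSimplex s ⊆ convexHull ℝ (s : Set (Fin n → ℝ)) := by
  rintro x ⟨w, hpos, hsum, hcomb⟩
  exact Finset.mem_convexHull'.2 ⟨w, fun v hv ↦ (hpos v hv).le, hsum, hcomb⟩

lemma nonempty_of_mem_openSimplex (hx : x ∈ openSimplex s) : s.Nonempty := by
  obtain ⟨w, -, hsum, -⟩ := hx
  exact Finset.nonempty_of_sum_ne_zero (hsum.trans_ne one_ne_zero)

lemma openSimplex_nonempty (hs : s.Nonempty) : (openSimplex s).Nonempty := by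
  have hcard : (0 : ℝ) < s.card := Nat.cast_pos.2 hs.card_pos
  refine ⟨_, fun _ ↦ (s.card : ℝ)⁻¹, fun _ _ ↦ inv_pos.2 hcard, ?_, rfl⟩
  rw [Finset.sum_const, nsmul_eq_mul, mul_inv_cancel₀ hcard.ne']

lemma exists_subset_mem_openSimplex (hx : x ∈ convexHull ℝ (s : Set (Fin n → ℝ))) :
    ∃ t ⊆ s, x ∈ openSimplex t := by
  obtain ⟨w, hnonneg, hsum, hcomb⟩ := Finset.mem_convexHull'.1 hx
  refine ⟨{v ∈ s | w v ≠ 0}, Finset.filter_subset _ _, w, fun v hv ↦ ?_, ?_, ?_⟩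
  · obtain ⟨hvs, hwv⟩ := Finset.mem_filter.1 hv
    exact (hnonneg v hvs).lt_of_ne' hwv
  · rw [Finset.sum_filter_ne_zero, hsum]
  · rw [← hcomb]
    exact Finset.sum_filter_of_ne fun v _ ↦ left_ne_zero_of_smul

lemma subset_of_mem_openSimplex_of_mem_convexHull
    (hs : AffineIndependent ℝ ((↑) : s → Fin n → ℝ)) (hts : t ⊆ s) (hxs : x ∈ openSimplex s)
    (hxt : x ∈ convexHull ℝ (t : Set (Fin n → ℝ))) : s ⊆ t := by
  obtain ⟨w, hpos, hsum, rfl⟩ := hxs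
  intro v hv
  by_contra hvt
  exact (hpos v hv).ne' (weight_eq_zero_of_sum_smul_mem_convexHull hs hts hsum hxt hv hvt)

end OpenSimplex

section FaceStar

variable {n : ℕ} {P : SimplicialComplex ℝ (Fin n → ℝ)} {s t : Finset (Fin n → ℝ)}
  {x : Fin n → ℝ}

lemma exists_face_mem_openSimplex (hx : x ∈ P.space) : ∃ s ∈ P.faces, x ∈ openSimplex s := by
  obtain ⟨s, hs, hxs⟩ := SimplicialComplex.mem_space_iff.1 hx
  obtain ⟨t, hts, hxt⟩ := exists_subset_mem_openSimplex hxs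
  exact ⟨t, P.down_closed hs hts (nonempty_of_mem_openSimplex hxt), hxt⟩

lemma mem_convexHull_face_iff_subset (hs : s ∈ P.faces) (ht : t ∈ P.faces)
    (hx : x ∈ openSimplex s) : x ∈ convexHull ℝ (t : Set (Fin n → ℝ)) ↔ s ⊆ t := by
  refine ⟨fun hxt ↦ ?_, fun hst ↦ convexHull_mono hst (openSimplex_subset_convexHull s hx)⟩
  have hxst : x ∈ convexHull ℝ ((s ∩ t : Finset (Fin n → ℝ)) : Set (Fin n → ℝ)) := by
    rw [Finset.coe_inter]
    exact P.inter_subset_convexHull hs ht ⟨openSimplex_subset_convexHull s hx, hxt⟩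
  exact (subset_of_mem_openSimplex_of_mem_convexHull (P.indep hs) Finset.inter_subset_left hx
    hxst).trans Finset.inter_subset_right

lemma face_eq_of_mem_openSimplex (hs : s ∈ P.faces) (ht : t ∈ P.faces)
    (hxs : x ∈ openSimplex s) (hxt : x ∈ openSimplex t) : s = t :=
  ((mem_convexHull_face_iff_subset hs ht hxs).1 (openSimplex_subset_convexHull t hxt)).antisymm
    ((mem_convexHull_face_iff_subset ht hs hxt).1 (openSimplex_subset_convexHull s hxs))

/-- The open star of a finite set `s` of points in `P`, for `s` not necessarily a face: the union
of the open simplexes of all faces of `P` containing `s`. It is used to describe the open star of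
a point through the face carrying it. -/
def faceStar (P : SimplicialComplex ℝ (Fin n → ℝ)) (s : Finset (Fin n → ℝ)) :
    Set (Fin n → ℝ) :=
  ⋃ t ∈ {t ∈ P.faces | s ⊆ t}, openSimplex t

lemma mem_faceStar : x ∈ faceStar P s ↔ ∃ t ∈ P.faces, s ⊆ t ∧ x ∈ openSimplex t := by
  simp only [faceStar, mem_iUnion₂, mem_ofPred_eq, exists_prop, and_assoc]

lemma openStar_eq_faceStar (hs : s ∈ P.faces) (hx : x ∈ openSimplex s) :
    openStar P x = faceStar P s := by
  have hfaces : {t ∈ P.faces | x ∈ convexHull ℝ (t : Set (Fin n → ℝ))} =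
      {t ∈ P.faces | s ⊆ t} :=
    sep_ext_iff.2 fun _ ht ↦ mem_convexHull_face_iff_subset hs ht hx
  rw [openStar, hfaces, faceStar]

lemma faceStar_inter_faceStar (P : SimplicialComplex ℝ (Fin n → ℝ))
    (s t : Finset (Fin n → ℝ)) : faceStar P s ∩ faceStar P t = faceStar P (s ∪ t) := by
  ext p
  simp only [mem_inter_iff, mem_faceStar]
  constructor
  · rintro ⟨⟨u, hu, hsu, hpu⟩, u', hu', htu', hpu'⟩
    obtain rfl := face_eq_of_mem_openSimplex hu hu' hpu hpu'
    exact ⟨u, hu, Finset.union_subset hsu htu', hpu⟩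
  · rintro ⟨u, hu, hstu, hpu⟩
    obtain ⟨hsu, htu⟩ := Finset.union_subset_iff.1 hstu
    exact ⟨⟨u, hu, hsu, hpu⟩, u, hu, htu, hpu⟩

lemma mem_faces_of_faceStar_nonempty (hs : s.Nonempty) (hne : (faceStar P s).Nonempty) :
    s ∈ P.faces := by
  obtain ⟨p, hp⟩ := hne
  obtain ⟨t, ht, hst, -⟩ := mem_faceStar.1 hp
  exact P.down_closed ht hst hs

end FaceStar

/-- If the intersection of the open stars of two points `x, y` of `|P|` is
nonempty, then it is itself the open star of some point `z` of `|P|`. -/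
theorem openStar_inter_openStar
    {n : ℕ} (P : Geometry.SimplicialComplex ℝ (Fin n → ℝ))
    (x y : Fin n → ℝ) (hx : x ∈ P.space) (hy : y ∈ P.space)
    (hne : (openStar P x ∩ openStar P y).Nonempty) :
    ∃ z ∈ P.space, openStar P x ∩ openStar P y = openStar P z := by
  obtain ⟨s, hs, hxs⟩ := exists_face_mem_openSimplex hx
  obtain ⟨t, ht, hyt⟩ := exists_face_mem_openSimplex hy
  rw [openStar_eq_faceStar hs hxs, openStar_eq_faceStar ht hyt, faceStar_inter_faceStar] at hne ⊢
  have hne_union : (s ∪ t).Nonempty := (nonempty_of_mem_openSimplex hxs).inl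
  have hst : s ∪ t ∈ P.faces := mem_faces_of_faceStar_nonempty hne_union hne
  obtain ⟨z, hz⟩ := openSimplex_nonempty hne_union
  exact ⟨z, SimplicialComplex.convexHull_subset_space hst (openSimplex_subset_convexHull _ hz),
    (openStar_eq_faceStar hst hz).symm⟩
end

section
/- Let P be a simplicial complex in ℝⁿ and let x ∈ |P|. Then the open star St(x,P) is star-shaped with center x: it contains x, and for every w ∈ St(x,P) the whole segment joining w to x is contained in St(x,P). In particular, St(x,P) is a contractible subspace of ℝⁿ. -/
open Set Geometry

/-
A point of a convex hull has all weights positive once the vertices of weight zero are dropped, so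
`x` lies in the open simplex of a face. Mixing nonnegative weights for `x` with positive weights
for `y` on the same face gives positive weights as soon as `y` has a positive share, so every point
strictly between `x` and `y` stays in the open simplex containing `y`.
-/

section OpenConvexHull

variable (𝕜 : Type*) {E : Type*} [Field 𝕜] [LinearOrder 𝕜] [AddCommGroup E] [Module 𝕜 E]

/-- The convex combinations of the points of `s` with all coefficients strictly positive. This
is the open simplex spanned by `s` when `s` is affinely independent; the definition allows any
finite set. -/
def openConvexHull (s : Finset E) : Set E :=
  {x | ∃ w : E → 𝕜, (∀ v ∈ s, 0 < w v) ∧ ∑ v ∈ s, w v = 1 ∧ ∑ v ∈ s, w v • v = x}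

/-- The open star of `x` with respect to the convex hulls of the faces of `K`: the union of the
open convex hulls of the faces whose convex hull contains `x`. Here `K` is an abstract
complex with vertices in `E`, whose faces may have degenerate or overlapping convex hulls. -/
def geometricOpenStar (K : PreAbstractSimplicialComplex E) (x : E) : Set E :=
  ⋃ s ∈ {s ∈ K.faces | x ∈ convexHull 𝕜 (s : Set E)}, openConvexHull 𝕜 s

variable {𝕜} {K : PreAbstractSimplicialComplex E} {s : Finset E} {x y : E}

theorem mem_geometricOpenStar :
    y ∈ geometricOpenStar 𝕜 K x ↔
      ∃ s ∈ K.faces, x ∈ convexHull 𝕜 (s : Set E) ∧ y ∈ openConvexHull 𝕜 s := by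
  simp only [geometricOpenStar, mem_iUnion₂, mem_ofPred_eq, exists_prop, and_assoc]

variable [IsStrictOrderedRing 𝕜]

theorem openConvexHull_subset_convexHull : openConvexHull 𝕜 s ⊆ convexHull 𝕜 (s : Set E) := by
  rintro x ⟨w, hw_pos, hw_sum, hwx⟩
  exact Finset.mem_convexHull'.2 ⟨w, fun v hv => (hw_pos v hv).le, hw_sum, hwx⟩

theorem exists_subset_mem_openConvexHull (hx : x ∈ convexHull 𝕜 (s : Set E)) :
    ∃ t ⊆ s, x ∈ openConvexHull 𝕜 t := by
  obtain ⟨w, hw_nonneg, hw_sum, hwx⟩ := Finset.mem_convexHull'.1 hx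
  refine ⟨{v ∈ s | w v ≠ 0}, Finset.filter_subset _ _, w, fun v hv => ?_, ?_, ?_⟩
  · obtain ⟨hvs, hv_ne⟩ := Finset.mem_filter.1 hv
    exact (hw_nonneg v hvs).lt_of_ne' hv_ne
  · rw [Finset.sum_filter_ne_zero, hw_sum]
  · rw [← hwx]
    exact Finset.sum_filter_of_ne fun v _ hv => left_ne_zero_of_smul hv

theorem openSegment_convexHull_openConvexHull_subset (hx : x ∈ convexHull 𝕜 (s : Set E))
    (hy : y ∈ openConvexHull 𝕜 s) : openSegment 𝕜 x y ⊆ openConvexHull 𝕜 s := by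
  obtain ⟨u, hu_nonneg, hu_sum, rfl⟩ := Finset.mem_convexHull'.1 hx
  obtain ⟨w, hw_pos, hw_sum, rfl⟩ := hy
  rintro _ ⟨a, b, ha, hb, hab, rfl⟩
  refine ⟨fun v => a * u v + b * w v, fun v hv => ?_, ?_, ?_⟩
  · exact add_pos_of_nonneg_of_pos (mul_nonneg ha.le (hu_nonneg v hv)) (mul_pos hb (hw_pos v hv))
  · rw [Finset.sum_add_distrib, ← Finset.mul_sum, ← Finset.mul_sum, hu_sum, hw_sum, mul_one,
      mul_one, hab]
  · simp only [add_smul, mul_smul, Finset.sum_add_distrib, Finset.smul_sum]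

theorem self_mem_geometricOpenStar (hs : s ∈ K.faces) (hx : x ∈ convexHull 𝕜 (s : Set E)) :
    x ∈ geometricOpenStar 𝕜 K x := by
  obtain ⟨t, hts, hxt⟩ := exists_subset_mem_openConvexHull hx
  have hxt' : x ∈ convexHull 𝕜 (t : Set E) := openConvexHull_subset_convexHull hxt
  have ht_nonempty : t.Nonempty := Finset.coe_nonempty.1 (convexHull_nonempty_iff.1 ⟨x, hxt'⟩)
  have ht : t ∈ K.faces := (K.isRelLowerSet_faces hs).2 hts ht_nonempty
  exact mem_geometricOpenStar.2 ⟨t, ht, hxt', hxt⟩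

theorem starConvex_geometricOpenStar : StarConvex 𝕜 x (geometricOpenStar 𝕜 K x) := by
  refine starConvex_iff_segment_subset.2 fun y hy => ?_
  obtain ⟨s, hs, hxs, hys⟩ := mem_geometricOpenStar.1 hy
  refine (openSegment_subset_iff_segment_subset (self_mem_geometricOpenStar hs hxs) hy).1 ?_
  exact fun z hz => mem_geometricOpenStar.2
    ⟨s, hs, hxs, openSegment_convexHull_openConvexHull_subset hxs hys hz⟩

end OpenConvexHull

theorem openStar_starShaped_contractible_general
    {E : Type*} [AddCommGroup E] [Module ℝ E] [TopologicalSpace E] [ContinuousAdd E]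
    [ContinuousSMul ℝ E] (K : PreAbstractSimplicialComplex E) (x : E)
    (hx : ∃ s ∈ K.faces, x ∈ convexHull ℝ (s : Set E)) :
    x ∈ geometricOpenStar ℝ K x ∧
    (∀ w ∈ geometricOpenStar ℝ K x, segment ℝ w x ⊆ geometricOpenStar ℝ K x) ∧
    ContractibleSpace ↥(geometricOpenStar ℝ K x) := by
  obtain ⟨s, hs, hxs⟩ := hx
  have hx_mem : x ∈ geometricOpenStar ℝ K x := self_mem_geometricOpenStar hs hxs
  have hstar : StarConvex ℝ x (geometricOpenStar ℝ K x) := starConvex_geometricOpenStar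
  refine ⟨hx_mem, fun w hw => ?_, hstar.contractibleSpace ⟨x, hx_mem⟩⟩
  rw [segment_symm]
  exact hstar.segment_subset hw

/-- The open star of a point `x ∈ |P|` is star-shaped with center `x`: it
contains `x`, and for every `w` in it the segment from `w` to `x` stays inside it. In
particular it is a contractible subspace of `ℝⁿ`. -/
theorem openStar_starShaped_contractible
    {n : ℕ} (P : Geometry.SimplicialComplex ℝ (Fin n → ℝ))
    (x : Fin n → ℝ) (hx : x ∈ P.space) :
    x ∈ openStar P x ∧
    (∀ w ∈ openStar P x, segment ℝ w x ⊆ openStar P x) ∧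
    ContractibleSpace ↥(openStar P x) := by
  exact openStar_starShaped_contractible_general P.toPreAbstractSimplicialComplex x
    (SimplicialComplex.mem_space_iff.1 hx)
end

section
/- Let P be a finite simplicial complex in ℝⁿ, let O be an open subset of |P|, and let 𝒲 be an open cover of O. Then there exists a simplicial complex L in ℝⁿ whose geometric realization satisfies |L| = O, which is locally finite in O (every point of O has a neighbourhood meeting the convex hulls of only finitely many faces of L), and such that for every face s of L the closed simplex convexHull(s) is contained in some member of 𝒲. -/
open Set Geometry

/-!
Intersecting the closed simplices of `P` with the boxes of dyadic grids gives a sequence of ever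
finer cell structures on `|P|`. To a point `x` of `O` assign its cell at the first level at which
the closed star of `x` lies in a member of `𝒲`. Passing to a face enlarges the star, so it can only
delay this level: along the boundary of a chosen cell the chosen cells are faces of it or finer
pieces of faces. Hence the chosen cells again form a locally finite cell structure, now on `O`, and
picking one point in each open cell yields its barycentric subdivision, the required complex.
-/

section

open Filter Topology

section ConvexGeometry

theorem exists_forall_le_of_isChain {ι α : Type*} [Preorder α] {f : ι → α} {s : Finset ι}
    (hs : IsChain (fun i j ↦ f i ≤ f j) (s : Set ι)) (hne : s.Nonempty) :
    ∃ i ∈ s, ∀ j ∈ s, f j ≤ f i := by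
  obtain ⟨i, hi, hmax⟩ := s.exists_maximalFor f hne
  refine ⟨i, hi, fun j hj ↦ ?_⟩
  rcases eq_or_ne i j with rfl | hij
  · exact le_rfl
  · exact (hs hi hj hij).elim (hmax hj) id

section LinearOrderedField

variable {𝕜 E : Type*} [Field 𝕜] [LinearOrder 𝕜] [IsStrictOrderedRing 𝕜] [AddCommGroup E]
  [Module 𝕜 E]

theorem affineIndependent_of_disjoint_convexHull_diff {s : Set E}
    (h : ∀ t ⊆ s, Disjoint (convexHull 𝕜 t) (convexHull 𝕜 (s \ t))) :
    AffineIndependent 𝕜 ((↑) : s → E) := by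
  by_contra hdep
  obtain ⟨I, hI⟩ := Convex.radon_partition hdep
  have hIc : ((↑) : s → E) '' Iᶜ = s \ (↑) '' I := by
    rw [image_compl_eq_range_sdiff_image Subtype.val_injective, Subtype.range_coe]
  rw [hIc] at hI
  exact not_disjoint_iff_nonempty_inter.2 hI (h _ (Subtype.coe_image_subset s I))

theorem isExtreme_convexHull_of_affineIndependent {s t : Finset E}
    (hs : AffineIndependent 𝕜 ((↑) : s → E)) (hts : t ⊆ s) :
    IsExtreme 𝕜 (convexHull 𝕜 (s : Set E)) (convexHull 𝕜 (t : Set E)) := by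
  classical
  refine ⟨convexHull_mono (by exact_mod_cast hts), fun x hx y hy z hz hzxy ↦ ?_⟩
  obtain ⟨a, b, ha, hb, hab, rfl⟩ := hzxy
  obtain ⟨u, hu₀, hu₁, rfl⟩ := Finset.mem_convexHull'.1 hx
  obtain ⟨v, hv₀, hv₁, rfl⟩ := Finset.mem_convexHull'.1 hy
  obtain ⟨w, -, hw₁, hw⟩ := Finset.mem_convexHull'.1 hz
  have hweights : ∀ p ∈ s, a * u p + b * v p = if p ∈ t then w p else 0 := by
    refine hs.eq_of_sum_eq_sum_subtype ?_ ?_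
    · rw [Finset.sum_add_distrib, ← Finset.mul_sum, ← Finset.mul_sum, hu₁, hv₁, Finset.sum_ite_mem,
        Finset.inter_eq_right.2 hts, hw₁, mul_one, mul_one, hab]
    · simp only [ite_smul, zero_smul, Finset.sum_ite_mem, Finset.inter_eq_right.2 hts, hw, add_smul,
        mul_smul, Finset.sum_add_distrib, Finset.smul_sum]
  have hu_zero : ∀ p ∈ s, p ∉ t → u p = 0 := by
    intro p hps hpt
    have hsum := hweights p hps
    rw [if_neg hpt] at hsum
    have hau := ((add_eq_zero_iff_of_nonneg (mul_nonneg ha.le (hu₀ p hps))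
      (mul_nonneg hb.le (hv₀ p hps))).1 hsum).1
    exact (mul_eq_zero.1 hau).resolve_left ha.ne'
  refine Finset.mem_convexHull'.2 ⟨u, fun p hp ↦ hu₀ p (hts hp), ?_, ?_⟩
  · rw [Finset.sum_subset hts hu_zero, hu₁]
  · exact Finset.sum_subset hts fun p hps hpt ↦ by rw [hu_zero p hps hpt, zero_smul]

theorem eq_or_mem_openSegment_of_mem_openSegment {b x y z : E} (hxb : x ≠ b)
    (hy : x ∈ openSegment 𝕜 b y) (hz : x ∈ openSegment 𝕜 b z) :
    y = z ∨ y ∈ openSegment 𝕜 b z ∨ z ∈ openSegment 𝕜 b y := by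
  have ray {p : E} (hp : x ∈ openSegment 𝕜 b p) : SameRay 𝕜 (x -ᵥ b) (p -ᵥ b) :=
    (mem_segment_iff_wbtw.1 (openSegment_subset_segment 𝕜 b p hp)).sameRay_vsub_left
  have ne {p : E} (hp : x ∈ openSegment 𝕜 b p) : b ≠ p := by
    rintro rfl
    simp [hxb] at hp
  rcases eq_or_ne y z with rfl | hyz
  · exact Or.inl rfl
  have hray : SameRay 𝕜 (y -ᵥ b) (z -ᵥ b) :=
    (ray hy).symm.trans (ray hz) fun h ↦ absurd (vsub_eq_zero_iff_eq.1 h) hxb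
  rcases wbtw_total_of_sameRay_vsub_left hray with h | h
  · exact Or.inr (Or.inl (mem_openSegment_of_ne_left_right (ne hy) hyz.symm
      (mem_segment_iff_wbtw.2 h)))
  · exact Or.inr (Or.inr (mem_openSegment_of_ne_left_right (ne hz) hyz
      (mem_segment_iff_wbtw.2 h)))

theorem eq_or_mem_or_exists_mem_openSegment_of_mem_convexHull_insert {s : Set E} {b x : E}
    (hx : x ∈ convexHull 𝕜 (insert b s)) :
    x = b ∨ x ∈ convexHull 𝕜 s ∨ ∃ y ∈ convexHull 𝕜 s, x ∈ openSegment 𝕜 b y := by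
  rcases s.eq_empty_or_nonempty with rfl | hs
  · exact Or.inl (by simpa using hx)
  · rw [convexHull_insert hs, convexJoin_singleton_left, mem_iUnion₂] at hx
    obtain ⟨y, hy, hxy⟩ := hx
    rw [← insert_endpoints_openSegment] at hxy
    rcases hxy with rfl | rfl | hxy
    exacts [Or.inl rfl, Or.inr (Or.inl hy), Or.inr (Or.inr ⟨y, hy, hxy⟩)]

theorem exists_pos_weights_of_notMem_convexHull_ssubset {s : Finset E} {x : E}
    (hx : x ∈ convexHull 𝕜 (s : Set E)) (hmin : ∀ t ⊂ s, x ∉ convexHull 𝕜 (t : Set E)) :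
    ∃ w : E → 𝕜, (∀ v ∈ s, 0 < w v) ∧ ∑ v ∈ s, w v = 1 ∧ ∑ v ∈ s, w v • v = x := by
  classical
  obtain ⟨w, hw₀, hw₁, hwx⟩ := Finset.mem_convexHull'.1 hx
  refine ⟨w, fun v hv ↦ (hw₀ v hv).lt_of_ne' fun hwv ↦ ?_, hw₁, hwx⟩
  refine hmin _ (Finset.erase_ssubset hv) (Finset.mem_convexHull'.2
    ⟨w, fun p hp ↦ hw₀ p (Finset.mem_of_mem_erase hp), ?_, ?_⟩)
  · rw [Finset.sum_erase _ hwv, hw₁]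
  · rw [Finset.sum_erase _ (by rw [hwv, zero_smul]), hwx]

end LinearOrderedField

theorem eventually_lineMap_mem_convexHull {E : Type*} [AddCommGroup E] [Module ℝ E]
    {s : Finset E} {x y : E}
    (hx : x ∈ convexHull ℝ (s : Set E)) (hmin : ∀ t ⊂ s, x ∉ convexHull ℝ (t : Set E))
    (hy : y ∈ convexHull ℝ (s : Set E)) :
    ∀ᶠ t in 𝓝 (1 : ℝ), AffineMap.lineMap y x t ∈ convexHull ℝ (s : Set E) := by
  obtain ⟨w, hw₀, hw₁, rfl⟩ := exists_pos_weights_of_notMem_convexHull_ssubset hx hmin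
  obtain ⟨u, -, hu₁, rfl⟩ := Finset.mem_convexHull'.1 hy
  have hpos : ∀ᶠ t in 𝓝 (1 : ℝ), ∀ v ∈ s, 0 < (1 - t) * u v + t * w v := by
    refine (Filter.eventually_all_finset s).2 fun v hv ↦ ?_
    have hcont : Continuous fun t : ℝ ↦ (1 - t) * u v + t * w v := by fun_prop
    exact hcont.continuousAt.eventually_const_lt (by simpa using hw₀ v hv)
  filter_upwards [hpos] with t ht
  refine Finset.mem_convexHull'.2 ⟨_, fun v hv ↦ (ht v hv).le, ?_, ?_⟩
  · rw [Finset.sum_add_distrib, ← Finset.mul_sum, ← Finset.mul_sum, hu₁, hw₁]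
    ring
  · simp only [AffineMap.lineMap_apply_module, add_smul, mul_smul, Finset.sum_add_distrib,
      Finset.smul_sum]

theorem isClosedEmbedding_lineMap {𝕜 E : Type*} [NontriviallyNormedField 𝕜] [CompleteSpace 𝕜]
    [AddCommGroup E] [Module 𝕜 E] [TopologicalSpace E] [IsTopologicalAddGroup E]
    [ContinuousSMul 𝕜 E] [T2Space E] {x y : E} (hxy : x ≠ y) :
    IsClosedEmbedding (AffineMap.lineMap x y : 𝕜 → E) :=
  (Homeomorph.addRight x).isClosedEmbedding.comp
    (isClosedEmbedding_smul_left (𝕜 := 𝕜) (sub_ne_zero.2 hxy.symm))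

end ConvexGeometry

section CellStructure

variable {E : Type*} [AddCommGroup E] [Module ℝ E] [TopologicalSpace E] {X : Set E}
  {σ : E → Set E}

/-- A decomposition of `X` into compact convex cells, encoded by the map `σ` sending a point
`x ∈ X` to the closed cell whose relative interior contains `x`; two points lie in the same open
cell iff `σ` agrees on them. The fields `mem_of_openSegment` and `eventually_lineMap_mem` express
that `x` is a relative interior point: a segment in `σ x` starting at `x` stays in the open cell of
`x` up to its other endpoint, and a segment in `σ x` ending at `x` extends beyond `x` within `σ x`.
The last field is local finiteness of the set of cells `σ '' X`. The values of `σ` outside `X` are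
irrelevant. -/
structure IsCellStructure (X : Set E) (σ : E → Set E) : Prop where
  mem_self : ∀ x ∈ X, x ∈ σ x
  subset_space : ∀ x ∈ X, σ x ⊆ X
  cell_subset_cell : ∀ x ∈ X, ∀ y ∈ σ x, σ y ⊆ σ x
  convex : ∀ x ∈ X, Convex ℝ (σ x)
  isCompact : ∀ x ∈ X, IsCompact (σ x)
  mem_of_openSegment : ∀ x ∈ X, ∀ y ∈ σ x, ∀ z ∈ openSegment ℝ x y, x ∈ σ z
  eventually_lineMap_mem : ∀ x ∈ X, ∀ y ∈ σ x, ∀ᶠ t in 𝓝 (1 : ℝ), AffineMap.lineMap y x t ∈ σ x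
  eventually_finite : ∀ y ∈ X, ∀ᶠ V in (𝓝 y).smallSets, {C ∈ σ '' X | (C ∩ V).Nonempty}.Finite

namespace IsCellStructure

variable {x y z b : E}

theorem mem_space (h : IsCellStructure X σ) (hx : x ∈ X) (hy : y ∈ σ x) : y ∈ X :=
  h.subset_space x hx hy

theorem cell_eq_of_mem_openSegment (h : IsCellStructure X σ) (hx : x ∈ X) (hy : y ∈ σ x)
    (hz : z ∈ openSegment ℝ x y) : σ z = σ x := by
  have hzx : z ∈ σ x := (h.convex x hx).openSegment_subset (h.mem_self x hx) hy hz
  exact (h.cell_subset_cell x hx z hzx).antisymm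
    (h.cell_subset_cell z (h.mem_space hx hzx) x (h.mem_of_openSegment x hx y hy z hz))

theorem finite_cells_inter_of_isCompact (h : IsCellStructure X σ) {K : Set E} (hK : IsCompact K)
    (hKX : K ⊆ X) : {C ∈ σ '' X | (C ∩ K).Nonempty}.Finite := by
  refine hK.induction_on (p := fun K ↦ {C ∈ σ '' X | (C ∩ K).Nonempty}.Finite) ?_ ?_ ?_ ?_
  · simp
  · exact fun s t hst ht ↦ ht.subset fun C hC ↦ ⟨hC.1, hC.2.mono (inter_subset_inter_right C hst)⟩
  · refine fun s t hs ht ↦ (hs.union ht).subset ?_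
    rintro C ⟨hCX, hC⟩
    rw [inter_union_distrib_left, union_nonempty] at hC
    exact hC.imp (And.intro hCX) (And.intro hCX)
  · intro x hx
    obtain ⟨V, hV, hfin⟩ := eventually_smallSets.1 (h.eventually_finite x (hKX hx))
    exact ⟨V, mem_nhdsWithin_of_mem_nhds hV, hfin V subset_rfl⟩

theorem finite_cells_subset (h : IsCellStructure X σ) (hx : x ∈ X) :
    {C ∈ σ '' X | C ⊆ σ x}.Finite := by
  refine (h.finite_cells_inter_of_isCompact (h.isCompact x hx) (h.subset_space x hx)).subset ?_
  rintro _ ⟨⟨y, hy, rfl⟩, hyx⟩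
  exact ⟨mem_image_of_mem σ hy, y, h.mem_self y hy, hyx (h.mem_self y hy)⟩

theorem exists_one_lt_lineMap_mem (h : IsCellStructure X σ) (hx : x ∈ X) (hy : y ∈ σ x) :
    ∃ t : ℝ, 1 < t ∧ AffineMap.lineMap y x t ∈ σ x :=
  (((h.eventually_lineMap_mem x hx y hy).filter_mono (nhdsWithin_le_nhds (s := Ioi 1))).and
    self_mem_nhdsWithin).exists.imp fun _ ↦ And.symm

theorem exists_ssubset_cell_mem_openSegment [IsTopologicalAddGroup E] [ContinuousSMul ℝ E]
    [T2Space E] (h : IsCellStructure X σ) (hx : x ∈ X) (hb : b ∈ σ x) (hbx : b ≠ x) :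
    ∃ y ∈ σ x, σ y ⊂ σ x ∧ x ∈ openSegment ℝ b y := by
  obtain ⟨T, hT, hmax⟩ := ((isClosedEmbedding_lineMap (𝕜 := ℝ) hbx).isCompact_preimage
    (h.isCompact x hx)).exists_isGreatest ⟨0, by simpa using hb⟩
  obtain ⟨t, ht1, ht⟩ := h.exists_one_lt_lineMap_mem hx hb
  have hT1 : 1 < T := ht1.trans_le (hmax ht)
  have hσT := h.cell_subset_cell x hx _ hT
  refine ⟨AffineMap.lineMap b x T, hT, hσT.ssubset_of_not_subset fun hsub ↦ ?_, ?_⟩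
  · obtain ⟨r, hr1, hr⟩ := h.exists_one_lt_lineMap_mem (h.mem_space hx hT) (hsub hb)
    rw [AffineMap.lineMap_lineMap_right] at hr
    exact (hmax (hσT hr)).not_gt (lt_mul_of_one_lt_left (by positivity) hr1)
  · rw [openSegment_eq_image_lineMap]
    refine ⟨T⁻¹, ⟨by positivity, inv_lt_one_of_one_lt₀ hT1⟩, ?_⟩
    rw [AffineMap.lineMap_lineMap_right, inv_mul_cancel₀ (by positivity),
      AffineMap.lineMap_apply_one]

end IsCellStructure

/-- Every point of `X` has a neighbourhood meeting only finitely many closed simplices of `L`. -/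
def LocallyFiniteOn (L : SimplicialComplex ℝ E) (X : Set E) : Prop :=
  ∀ y ∈ X, ∃ V : Set E, IsOpen V ∧ y ∈ V ∧
    {s ∈ L.faces | (convexHull ℝ (s : Set E) ∩ V).Nonempty}.Finite

theorem LocallyFiniteOn.of_finite {L : SimplicialComplex ℝ E} (hL : L.faces.Finite) (X : Set E) :
    LocallyFiniteOn L X :=
  fun y _ ↦ ⟨univ, isOpen_univ, mem_univ y, hL.subset (sep_subset _ _)⟩

/-! ### The barycentric subdivision of a cell structure -/

/-- The simplices of the barycentric subdivision of the cell structure `σ`, where `B` is a choice of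
one "barycentre" in each open cell: finite sets of barycentres whose cells form a chain. -/
def cellFlags {α : Type*} (σ : α → Set α) (B : Set α) : Set (Finset α) :=
  {s | ↑s ⊆ B ∧ IsChain (fun x y ↦ σ x ⊆ σ y) (s : Set α)}

theorem mem_cellFlags_of_subset {α : Type*} {σ : α → Set α} {B : Set α} {s t : Finset α}
    (hs : s ∈ cellFlags σ B) (hts : t ⊆ s) : t ∈ cellFlags σ B :=
  ⟨(Finset.coe_subset.2 hts).trans hs.1, hs.2.mono (Finset.coe_subset.2 hts)⟩

namespace IsCellStructure

variable {B : Set E} {x y y' b : E} {s t : Finset E}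

theorem exists_convexHull_flag_subset_cell (h : IsCellStructure X σ) (hBX : B ⊆ X)
    (hs : s ∈ cellFlags σ B) (hne : s.Nonempty) :
    ∃ b ∈ s, (∀ v ∈ s, σ v ⊆ σ b) ∧ convexHull ℝ (s : Set E) ⊆ σ b := by
  obtain ⟨b, hb, hmax⟩ := exists_forall_le_of_isChain hs.2 hne
  exact ⟨b, hb, hmax, convexHull_min (fun v hv ↦ hmax v hv (h.mem_self v (hBX (hs.1 hv))))
    (h.convex b (hBX (hs.1 hb)))⟩

theorem convexHull_flag_subset_space (h : IsCellStructure X σ) (hBX : B ⊆ X)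
    (hs : s ∈ cellFlags σ B) : convexHull ℝ (s : Set E) ⊆ X := by
  rcases s.eq_empty_or_nonempty with rfl | hne
  · simp
  obtain ⟨b, hb, -, hsub⟩ := h.exists_convexHull_flag_subset_cell hBX hs hne
  exact hsub.trans (h.subset_space b (hBX (hs.1 hb)))

open scoped Classical in
theorem exists_apex_of_mem_convexHull (h : IsCellStructure X σ) (hBX : B ⊆ X) (hB : InjOn σ B)
    (hs : s ∈ cellFlags σ B) (hx : x ∈ convexHull ℝ (s : Set E)) :
    ∃ b ∈ s, σ b = σ x ∧ (x = b ∨ ∃ y ∈ convexHull ℝ ({v ∈ s | σ v ⊂ σ b} : Finset E),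
      σ y ⊂ σ b ∧ x ∈ openSegment ℝ b y) := by
  induction s using Finset.strongInduction generalizing x with | H s ih =>
  obtain ⟨b, hb, hmax, hsub⟩ := h.exists_convexHull_flag_subset_cell hBX hs
    (Finset.coe_nonempty.1 (convexHull_nonempty_iff.1 ⟨x, hx⟩))
  have hlt : ∀ v ∈ s.erase b, σ v ⊂ σ b := fun v hv ↦
    (hmax v (Finset.mem_of_mem_erase hv)).ssubset_of_ne fun he ↦
      Finset.ne_of_mem_erase hv (hB (hs.1 (Finset.mem_of_mem_erase hv)) (hs.1 hb) he)
  have ih' : ∀ {y}, y ∈ convexHull ℝ (s.erase b : Set E) → _ :=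
    ih _ (Finset.erase_ssubset hb) (mem_cellFlags_of_subset hs (s.erase_subset b))
  rw [← Finset.insert_erase hb, Finset.coe_insert] at hx
  rcases eq_or_mem_or_exists_mem_openSegment_of_mem_convexHull_insert hx with
    rfl | hx | ⟨y, hy, hxy⟩
  · exact ⟨x, hb, rfl, Or.inl rfl⟩
  · obtain ⟨c, hc, hcx, h⟩ := ih' hx
    refine ⟨c, Finset.mem_of_mem_erase hc, hcx, h.imp_right ?_⟩
    rintro ⟨y, hy, hyc, hxy⟩
    refine ⟨y, convexHull_mono (Finset.coe_subset.2 ?_) hy, hyc, hxy⟩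
    exact Finset.filter_subset_filter _ (s.erase_subset b)
  · obtain ⟨c, hc, hcy, -⟩ := ih' hy
    have hyb : σ y ⊂ σ b := hcy ▸ hlt c hc
    have hy' : y ∈ σ b := hsub (convexHull_mono (s.erase_subset b) hy)
    refine ⟨b, hb, (h.cell_eq_of_mem_openSegment (hBX (hs.1 hb)) hy' hxy).symm,
      Or.inr ⟨y, convexHull_mono (Finset.coe_subset.2 fun v hv ↦ ?_) hy, hyb, hxy⟩⟩
    exact Finset.mem_filter.2 ⟨Finset.mem_of_mem_erase hv, hlt v hv⟩

theorem eq_of_ssubset_of_mem_openSegment (h : IsCellStructure X σ) (hb : b ∈ X) (hxb : x ≠ b)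
    (hyb : σ y ⊂ σ b) (hyb' : σ y' ⊂ σ b) (hy : y ∈ X) (hy' : y' ∈ X)
    (hx : x ∈ openSegment ℝ b y) (hx' : x ∈ openSegment ℝ b y') : y = y' := by
  rcases eq_or_mem_openSegment_of_mem_openSegment hxb hx hx' with rfl | hmem | hmem
  · rfl
  · exact absurd (h.cell_eq_of_mem_openSegment hb (hyb'.subset (h.mem_self y' hy')) hmem) hyb.ne
  · exact absurd (h.cell_eq_of_mem_openSegment hb (hyb.subset (h.mem_self y hy)) hmem) hyb'.ne

open scoped Classical in
theorem convexHull_inter_convexHull_subset (h : IsCellStructure X σ) (hBX : B ⊆ X)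
    (hB : InjOn σ B) (hs : s ∈ cellFlags σ B) (ht : t ∈ cellFlags σ B) :
    convexHull ℝ (s : Set E) ∩ convexHull ℝ (t : Set E) ⊆ convexHull ℝ (s ∩ t : Set E) := by
  induction s using Finset.strongInduction generalizing t with | H s ih =>
  rintro x ⟨hxs, hxt⟩
  obtain ⟨b, hbs, hbx, hb⟩ := h.exists_apex_of_mem_convexHull hBX hB hs hxs
  obtain ⟨b', hbt, hbx', hb'⟩ := h.exists_apex_of_mem_convexHull hBX hB ht hxt
  obtain rfl : b = b' := hB (hs.1 hbs) (ht.1 hbt) (hbx.trans hbx'.symm)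
  have hbst : b ∈ convexHull ℝ (s ∩ t : Set E) := subset_convexHull ℝ _ ⟨hbs, hbt⟩
  rcases eq_or_ne x b with rfl | hxb
  · exact hbst
  obtain ⟨y, hy, hyb, hxy⟩ := hb.resolve_left hxb
  obtain ⟨y', hy', hyb', hxy'⟩ := hb'.resolve_left hxb
  have hsb := mem_cellFlags_of_subset hs (s.filter_subset (σ · ⊂ σ b))
  have htb := mem_cellFlags_of_subset ht (t.filter_subset (σ · ⊂ σ b))
  obtain rfl : y = y' := h.eq_of_ssubset_of_mem_openSegment (hBX (hs.1 hbs)) hxb hyb hyb'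
    (h.convexHull_flag_subset_space hBX hsb hy) (h.convexHull_flag_subset_space hBX htb hy')
    hxy hxy'
  have hssub : s.filter (σ · ⊂ σ b) ⊂ s := Finset.filter_ssubset.2 ⟨b, hbs, ssubset_irrefl _⟩
  have hyst : y ∈ convexHull ℝ (s ∩ t : Set E) := convexHull_mono
    (inter_subset_inter (Finset.filter_subset _ s) (Finset.filter_subset _ t))
    (ih _ hssub hsb htb ⟨hy, hy'⟩)
  exact (convex_convexHull ℝ _).openSegment_subset hbst hyst hxy

theorem affineIndependent_flag (h : IsCellStructure X σ) (hBX : B ⊆ X) (hB : InjOn σ B)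
    (hs : s ∈ cellFlags σ B) : AffineIndependent ℝ ((↑) : s → E) := by
  classical
  refine affineIndependent_of_disjoint_convexHull_diff (s := (s : Set E)) fun t ht ↦ ?_
  lift t to Finset E using s.finite_toSet.subset ht
  rw [← Finset.coe_sdiff, disjoint_iff_inter_eq_empty, ← subset_empty_iff]
  refine (h.convexHull_inter_convexHull_subset hBX hB (mem_cellFlags_of_subset hs
    (Finset.coe_subset.1 ht)) (mem_cellFlags_of_subset hs s.sdiff_subset)).trans ?_
  simp

/-- The barycentric subdivision of the cell structure `σ`, where `B` contains exactly one point of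
each open cell. -/
def subdivision (h : IsCellStructure X σ) (hBX : B ⊆ X) (hB : InjOn σ B) :
    SimplicialComplex ℝ E where
  faces := {s ∈ cellFlags σ B | s.Nonempty}
  indep hs := h.affineIndependent_flag hBX hB hs.1
  isRelLowerSet_faces := fun _ hs ↦ ⟨hs.2, fun _ hts ht ↦ ⟨mem_cellFlags_of_subset hs.1 hts, ht⟩⟩
  inter_subset_convexHull hs ht := h.convexHull_inter_convexHull_subset hBX hB hs.1 ht.1

theorem subdivision_locallyFiniteOn (h : IsCellStructure X σ) (hBX : B ⊆ X) (hB : InjOn σ B) :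
    LocallyFiniteOn (h.subdivision hBX hB) X := by
  intro y hy
  obtain ⟨V, hV, hfin⟩ := eventually_smallSets.1 (h.eventually_finite y hy)
  refine ⟨interior V, isOpen_interior, mem_interior_iff_mem_nhds.2 hV, ?_⟩
  set 𝒢 : Set (Set E) := ⋃ C ∈ {C ∈ σ '' X | (C ∩ interior V).Nonempty}, {D ∈ σ '' X | D ⊆ C}
  have h𝒢 : 𝒢.Finite := (hfin _ interior_subset).biUnion <| by
    rintro _ ⟨⟨x, hx, rfl⟩, -⟩
    exact h.finite_cells_subset hx
  have hBfin : (B ∩ σ ⁻¹' 𝒢).Finite := .of_finite_image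
    (h𝒢.subset (image_subset_iff.2 inter_subset_right)) (hB.mono inter_subset_left)
  refine (hBfin.finite_subsets.preimage Finset.coe_injective.injOn).subset ?_
  rintro s ⟨⟨hs, hne⟩, hsV⟩
  obtain ⟨b, hb, hmax, hsub⟩ := h.exists_convexHull_flag_subset_cell hBX hs hne
  exact fun v hv ↦ ⟨hs.1 hv, mem_iUnion₂.2 ⟨σ b, ⟨mem_image_of_mem σ (hBX (hs.1 hb)),
    hsV.mono (inter_subset_inter_left _ hsub)⟩, mem_image_of_mem σ (hBX (hs.1 hv)), hmax v hv⟩⟩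

variable [IsTopologicalAddGroup E] [ContinuousSMul ℝ E] [T2Space E]

theorem exists_flag_mem_convexHull (h : IsCellStructure X σ) (hB : σ '' X ⊆ σ '' B) (hBX : B ⊆ X)
    (hx : x ∈ X) : ∃ s ∈ cellFlags σ B, ↑s ⊆ σ x ∧ x ∈ convexHull ℝ (s : Set E) := by
  classical
  induction hn : {C ∈ σ '' X | C ⊆ σ x}.ncard using Nat.strong_induction_on generalizing x with
  | _ n ih =>
  subst hn
  obtain ⟨b, hbB, hbx⟩ := hB (mem_image_of_mem σ hx)
  have hb : b ∈ σ x := hbx ▸ h.mem_self b (hBX hbB)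
  rcases eq_or_ne b x with rfl | hne
  · exact ⟨{b}, ⟨by simpa using hbB, by simp⟩, by simpa using hb, by simp⟩
  obtain ⟨y, hy, hyx, hxy⟩ := h.exists_ssubset_cell_mem_openSegment hx hb hne
  have hyX := h.mem_space hx hy
  have hssub : {C ∈ σ '' X | C ⊆ σ y} ⊂ {C ∈ σ '' X | C ⊆ σ x} :=
    ⟨fun C hC ↦ ⟨hC.1, hC.2.trans hyx.subset⟩,
      fun hsub ↦ hyx.not_subset (hsub ⟨mem_image_of_mem σ hx, subset_rfl⟩).2⟩
  obtain ⟨s, hs, hsy, hys⟩ := ih _ (ncard_lt_ncard hssub (h.finite_cells_subset hx)) hyX rfl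
  refine ⟨insert b s, ⟨?_, ?_⟩, ?_, ?_⟩
  · simpa [insert_subset_iff] using ⟨hbB, hs.1⟩
  · rw [Finset.coe_insert]
    exact hs.2.insert fun v hv _ ↦ Or.inr
      (hbx ▸ h.cell_subset_cell x hx v (hyx.subset (hsy hv)))
  · simpa [insert_subset_iff] using ⟨hb, hsy.trans hyx.subset⟩
  · rw [Finset.coe_insert]
    exact (convex_convexHull ℝ _).openSegment_subset (subset_convexHull ℝ _ (mem_insert b _))
      (convexHull_mono (subset_insert b _) hys) hxy

theorem subdivision_space (h : IsCellStructure X σ) (hBX : B ⊆ X) (hB : BijOn σ B (σ '' X)) :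
    (h.subdivision hBX hB.injOn).space = X := by
  refine Subset.antisymm (fun x hx ↦ ?_) fun x hx ↦ ?_
  · obtain ⟨s, hs, hxs⟩ := SimplicialComplex.mem_space_iff.1 hx
    exact h.convexHull_flag_subset_space hBX hs.1 hxs
  · obtain ⟨s, hs, -, hxs⟩ := h.exists_flag_mem_convexHull hB.surjOn hBX hx
    exact SimplicialComplex.mem_space_iff.2
      ⟨s, ⟨hs, Finset.coe_nonempty.1 (convexHull_nonempty_iff.1 ⟨x, hxs⟩)⟩, hxs⟩

theorem exists_triangulation (h : IsCellStructure X σ) :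
    ∃ L : SimplicialComplex ℝ E, L.space = X ∧ LocallyFiniteOn L X ∧
      ∀ s ∈ L.faces, ∃ x ∈ X, convexHull ℝ (s : Set E) ⊆ σ x := by
  obtain ⟨B, hBX, hB⟩ := exists_subset_bijOn X σ
  refine ⟨h.subdivision hBX hB.injOn, h.subdivision_space hBX hB,
    h.subdivision_locallyFiniteOn hBX hB.injOn, fun s hs ↦ ?_⟩
  obtain ⟨b, hb, -, hsub⟩ := h.exists_convexHull_flag_subset_cell hBX hs.1 hs.2
  exact ⟨b, hBX (hs.1.1 hb), hsub⟩

end IsCellStructure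

/-! ### Constructions of cell structures -/

namespace IsCellStructure

theorem inter [T2Space E] {Y : Set E} {τ : E → Set E} (hσ : IsCellStructure X σ)
    (hτ : IsCellStructure Y τ) : IsCellStructure (X ∩ Y) (fun x ↦ σ x ∩ τ x) where
  mem_self x hx := ⟨hσ.mem_self x hx.1, hτ.mem_self x hx.2⟩
  subset_space x hx := inter_subset_inter (hσ.subset_space x hx.1) (hτ.subset_space x hx.2)
  cell_subset_cell x hx y hy := inter_subset_inter (hσ.cell_subset_cell x hx.1 y hy.1)
    (hτ.cell_subset_cell x hx.2 y hy.2)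
  convex x hx := (hσ.convex x hx.1).inter (hτ.convex x hx.2)
  isCompact x hx := (hσ.isCompact x hx.1).inter (hτ.isCompact x hx.2)
  mem_of_openSegment x hx y hy z hz := ⟨hσ.mem_of_openSegment x hx.1 y hy.1 z hz,
    hτ.mem_of_openSegment x hx.2 y hy.2 z hz⟩
  eventually_lineMap_mem x hx y hy := (hσ.eventually_lineMap_mem x hx.1 y hy.1).and
    (hτ.eventually_lineMap_mem x hx.2 y hy.2)
  eventually_finite y hy := by
    filter_upwards [hσ.eventually_finite y hy.1, hτ.eventually_finite y hy.2] with V hV hV'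
    refine (hV.image2 (· ∩ ·) hV').subset ?_
    rintro _ ⟨⟨x, hx, rfl⟩, z, hz, hzV⟩
    exact mem_image2_of_mem ⟨mem_image_of_mem σ hx.1, z, hz.1, hzV⟩
      ⟨mem_image_of_mem τ hx.2, z, hz.2, hzV⟩

theorem preimage {F : Type*} [AddCommGroup F] [Module ℝ F] [TopologicalSpace F] {Y : Set F}
    {τ : F → Set F} (h : IsCellStructure Y τ) (f : E ≃L[ℝ] F) :
    IsCellStructure (f ⁻¹' Y) (fun x ↦ f ⁻¹' τ (f x)) where
  mem_self x hx := h.mem_self (f x) hx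
  subset_space x hx := preimage_mono (h.subset_space (f x) hx)
  cell_subset_cell x hx y hy := preimage_mono (h.cell_subset_cell (f x) hx (f y) hy)
  convex x hx := (h.convex (f x) hx).linear_preimage (f : E →ₗ[ℝ] F)
  isCompact x hx := f.toHomeomorph.isCompact_preimage.2 (h.isCompact (f x) hx)
  mem_of_openSegment x hx y hy z hz := by
    obtain ⟨a, b, ha, hb, hab, rfl⟩ := hz
    exact h.mem_of_openSegment (f x) hx (f y) hy _ ⟨a, b, ha, hb, hab, by simp⟩
  eventually_lineMap_mem x hx y hy := by
    filter_upwards [h.eventually_lineMap_mem (f x) hx (f y) hy] with t ht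
    simpa [AffineMap.lineMap_apply] using ht
  eventually_finite y hy := by
    have htendsto : Tendsto (image f) (𝓝 y).smallSets (𝓝 (f y)).smallSets :=
      tendsto_image_smallSets.2 f.continuous.continuousAt
    filter_upwards [htendsto.eventually (h.eventually_finite (f y) hy)] with V hV
    refine (hV.image (f ⁻¹' ·)).subset ?_
    rintro _ ⟨⟨x, hx, rfl⟩, z, hz, hzV⟩
    exact mem_image_of_mem _ ⟨mem_image_of_mem τ hx, f z, hz, mem_image_of_mem f hzV⟩

theorem pi {ι : Type*} [Finite ι] {F : ι → Type*} [∀ i, AddCommGroup (F i)] [∀ i, Module ℝ (F i)]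
    [∀ i, TopologicalSpace (F i)] {Y : ∀ i, Set (F i)} {τ : ∀ i, F i → Set (F i)}
    (h : ∀ i, IsCellStructure (Y i) (τ i)) :
    IsCellStructure (univ.pi Y) (fun x ↦ univ.pi fun i ↦ τ i (x i)) where
  mem_self x hx i hi := (h i).mem_self (x i) (hx i hi)
  subset_space x hx := pi_mono fun i hi ↦ (h i).subset_space (x i) (hx i hi)
  cell_subset_cell x hx y hy := pi_mono fun i hi ↦
    (h i).cell_subset_cell (x i) (hx i hi) (y i) (hy i hi)
  convex x hx := convex_pi fun i hi ↦ (h i).convex (x i) (hx i hi)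
  isCompact x hx := isCompact_univ_pi fun i ↦ (h i).isCompact (x i) (hx i (mem_univ i))
  mem_of_openSegment x hx y hy z hz i hi := by
    obtain ⟨a, b, ha, hb, hab, rfl⟩ := hz
    exact (h i).mem_of_openSegment (x i) (hx i hi) (y i) (hy i hi) _ ⟨a, b, ha, hb, hab, rfl⟩
  eventually_lineMap_mem x hx y hy := by
    have hall := eventually_all.2 fun i ↦
      (h i).eventually_lineMap_mem (x i) (hx i (mem_univ i)) (y i) (hy i (mem_univ i))
    filter_upwards [hall] with t ht i _
    simpa [AffineMap.lineMap_apply] using ht i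
  eventually_finite y hy := by
    have hall := eventually_all.2 fun i ↦
      (tendsto_image_smallSets.2 (continuous_apply (A := F) i).continuousAt).eventually
        ((h i).eventually_finite (y i) (hy i (mem_univ i)))
    filter_upwards [hall] with V hV
    refine ((Finite.pi' hV).image univ.pi).subset ?_
    rintro _ ⟨⟨x, hx, rfl⟩, z, hz, hzV⟩
    exact mem_image_of_mem _ fun i ↦ ⟨mem_image_of_mem _ (hx i (mem_univ i)), z i,
      hz i (mem_univ i), mem_image_of_mem _ hzV⟩

theorem adaptive {σ : ℕ → E → Set E} (hσ : ∀ k, IsCellStructure X (σ k))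
    (hanti : ∀ x, Antitone (σ · x)) {O : Set E} (hOX : O ⊆ X) {ℓ : E → ℕ}
    (hO : ∀ x ∈ O, σ (ℓ x) x ⊆ O) (hℓ : ∀ x ∈ O, ∀ y ∈ O, y ∈ σ (ℓ y) x → ℓ x ≤ ℓ y)
    (hbdd : ∀ y ∈ O, ∃ j, ∀ᶠ z in 𝓝 y, z ∈ O → ℓ z ≤ j) :
    IsCellStructure O (fun x ↦ σ (ℓ x) x) := by
  have level_le : ∀ x ∈ O, ∀ y ∈ σ (ℓ x) x, ℓ x ≤ ℓ y := fun x hx y hy ↦ by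
    by_contra! hlt
    exact hlt.not_ge (hℓ x hx y (hO x hx hy) (hanti x hlt.le hy))
  refine ⟨fun x hx ↦ (hσ _).mem_self x (hOX hx), hO, fun x hx y hy ↦ ?_,
    fun x hx ↦ (hσ _).convex x (hOX hx), fun x hx ↦ (hσ _).isCompact x (hOX hx),
    fun x hx y hy z hz ↦ ?_, fun x hx ↦ (hσ _).eventually_lineMap_mem x (hOX hx), fun y hy ↦ ?_⟩
  · exact (hanti y (level_le x hx y hy)).trans ((hσ _).cell_subset_cell x (hOX hx) y hy)
  · have hzx : z ∈ σ (ℓ x) x := ((hσ _).convex x (hOX hx)).openSegment_subset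
      ((hσ _).mem_self x (hOX hx)) hy hz
    have hxz : x ∈ σ (ℓ x) z := (hσ _).mem_of_openSegment x (hOX hx) y hy z hz
    have hlevel : ℓ z = ℓ x := (hℓ z (hO x hx hzx) x hx hxz).antisymm (level_le x hx z hzx)
    simpa only [hlevel] using hxz
  · obtain ⟨j, hj⟩ := hbdd y hy
    have hfin := (finite_Iic j).eventually_all.2 fun k _ ↦ (hσ k).eventually_finite y (hOX hy)
    filter_upwards [hfin, hj.smallSets] with V hV hVj
    refine ((finite_Iic j).biUnion hV).subset ?_
    rintro _ ⟨⟨x, hx, rfl⟩, z, hz, hzV⟩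
    exact mem_iUnion₂.2 ⟨ℓ x, (level_le x hx z hz).trans (hVj z hzV (hO x hx hz)),
      mem_image_of_mem _ (hOX hx), z, hz, hzV⟩

end IsCellStructure

/-- A sequence of cell structures on `X`, each subdividing the previous one, whose cells shrink to
points locally uniformly: the last field says that near `y`, all cells of some level are contained
in any prescribed neighbourhood of `y`. -/
structure IsCellTower (X : Set E) (σ : ℕ → E → Set E) : Prop where
  isCellStructure : ∀ k, IsCellStructure X (σ k)
  antitone : ∀ x, Antitone (σ · x)
  exists_cell_subset : ∀ y ∈ X, ∀ U ∈ 𝓝 y, ∃ j, ∀ᶠ V in (𝓝 y).smallSets, ∀ x ∈ X,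
    (σ j x ∩ V).Nonempty → σ j x ⊆ U

/-- The closed star of `x`: the union of all cells containing `x`. -/
def cellStar {α : Type*} (X : Set α) (σ : α → Set α) (x : α) : Set α :=
  ⋃ w ∈ {w ∈ X | x ∈ σ w}, σ w

theorem IsCellStructure.cellStar_subset_cellStar (h : IsCellStructure X σ) {x y : E}
    (hy : y ∈ σ x) : cellStar X σ x ⊆ cellStar X σ y :=
  biUnion_subset_biUnion_left fun w hw ↦ ⟨hw.1, h.cell_subset_cell w hw.1 x hw.2 hy⟩

theorem IsCellStructure.cell_subset_cellStar (h : IsCellStructure X σ) {x : E} (hx : x ∈ X) :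
    σ x ⊆ cellStar X σ x :=
  subset_biUnion_of_mem (u := σ) ⟨hx, h.mem_self x hx⟩

namespace IsCellTower

variable {σ : ℕ → E → Set E}

theorem inter [T2Space E] (hσ : IsCellTower X σ) {Y : Set E} {τ : E → Set E}
    (hτ : IsCellStructure Y τ) : IsCellTower (X ∩ Y) (fun k x ↦ σ k x ∩ τ x) where
  isCellStructure k := (hσ.isCellStructure k).inter hτ
  antitone x _ _ hij := inter_subset_inter_left _ (hσ.antitone x hij)
  exists_cell_subset y hy U hU := by
    obtain ⟨j, hj⟩ := hσ.exists_cell_subset y hy.1 U hU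
    refine ⟨j, hj.mono fun V hV x hx hne ↦ inter_subset_left.trans (hV x hx.1 (hne.mono ?_))⟩
    exact inter_subset_inter_left _ inter_subset_left

theorem preimage {F : Type*} [AddCommGroup F] [Module ℝ F] [TopologicalSpace F] {Y : Set F}
    {τ : ℕ → F → Set F} (h : IsCellTower Y τ) (f : E ≃L[ℝ] F) :
    IsCellTower (f ⁻¹' Y) (fun k x ↦ f ⁻¹' τ k (f x)) where
  isCellStructure k := (h.isCellStructure k).preimage f
  antitone x _ _ hij := preimage_mono (h.antitone (f x) hij)
  exists_cell_subset y hy U hU := by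
    obtain ⟨j, hj⟩ := h.exists_cell_subset (f y) hy (f '' U)
      (f.toHomeomorph.isOpenMap.image_mem_nhds hU)
    refine ⟨j, ?_⟩
    filter_upwards [(tendsto_image_smallSets.2 f.continuous.continuousAt).eventually hj] with V hV
    rintro x hx ⟨z, hz, hzV⟩
    rw [← f.injective.preimage_image U]
    exact preimage_mono (hV (f x) hx ⟨f z, hz, mem_image_of_mem f hzV⟩)

theorem eventually_cellStar_subset (h : IsCellTower X σ) {y : E} {U : Set E} (hy : y ∈ X)
    (hU : U ∈ 𝓝 y) : ∃ j, ∀ᶠ z in 𝓝 y, cellStar X (σ j) z ⊆ U ∩ X := by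
  obtain ⟨j, hj⟩ := h.exists_cell_subset y hy U hU
  obtain ⟨V, hV, hVU⟩ := eventually_smallSets.1 hj
  refine ⟨j, mem_of_superset hV fun z hz ↦ ?_⟩
  exact iUnion₂_subset fun w hw ↦ subset_inter (hVU V subset_rfl w hw.1 ⟨z, hw.2, hz⟩)
    ((h.isCellStructure j).subset_space w hw.1)

theorem exists_isCellStructure_sUnion (h : IsCellTower X σ) {𝒲 : Set (Set E)}
    (h𝒲 : ∀ W ∈ 𝒲, ∃ U, IsOpen U ∧ W = U ∩ X) :
    ∃ τ, IsCellStructure (⋃₀ 𝒲) τ ∧ ∀ x ∈ ⋃₀ 𝒲, ∃ W ∈ 𝒲, τ x ⊆ W := by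
  have hX : ⋃₀ 𝒲 ⊆ X := sUnion_subset fun W hW ↦ by
    obtain ⟨U, -, rfl⟩ := h𝒲 W hW
    exact inter_subset_right
  let small (x : E) (k : ℕ) : Prop := ∃ W ∈ 𝒲, cellStar X (σ k) x ⊆ W
  have eventually_small : ∀ y ∈ ⋃₀ 𝒲, ∃ j, ∀ᶠ z in 𝓝 y, small z j := by
    rintro y ⟨W, hW, hyW⟩
    obtain ⟨U, hU, rfl⟩ := h𝒲 W hW
    obtain ⟨j, hj⟩ := h.eventually_cellStar_subset hyW.2 (hU.mem_nhds hyW.1)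
    exact ⟨j, hj.mono fun z hz ↦ ⟨_, hW, hz⟩⟩
  let ℓ (x : E) : ℕ := sInf {k | small x k}
  have small_level : ∀ x ∈ ⋃₀ 𝒲, small x (ℓ x) := fun x hx ↦
    Nat.sInf_mem (s := {k | small x k}) ((eventually_small x hx).imp fun _ h ↦ h.self_of_nhds)
  have hcell : ∀ x ∈ ⋃₀ 𝒲, ∃ W ∈ 𝒲, σ (ℓ x) x ⊆ W := fun x hx ↦ (small_level x hx).imp
    fun W ↦ And.imp_right (((h.isCellStructure _).cell_subset_cellStar (hX hx)).trans)
  refine ⟨fun x ↦ σ (ℓ x) x, .adaptive h.isCellStructure h.antitone hX (fun x hx ↦ ?_)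
    (fun x _ y hy hxy ↦ ?_) (fun y hy ↦ ?_), hcell⟩
  · obtain ⟨W, hW, hxW⟩ := hcell x hx
    exact hxW.trans (subset_sUnion_of_mem hW)
  · obtain ⟨W, hW, hyW⟩ := small_level y hy
    exact Nat.sInf_le ⟨W, hW,
      ((h.isCellStructure _).cellStar_subset_cellStar hxy).trans hyW⟩
  · exact (eventually_small y hy).imp fun j hj ↦ hj.mono fun z hz _ ↦ Nat.sInf_le hz

end IsCellTower

end CellStructure

section DyadicGrid

theorem isCellStructure_Icc_floor_ceil :
    IsCellStructure (univ : Set ℝ) (fun x ↦ Icc (⌊x⌋ : ℝ) ⌈x⌉) where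
  mem_self x _ := ⟨Int.floor_le x, Int.le_ceil x⟩
  subset_space _ _ := subset_univ _
  cell_subset_cell x _ y hy := Icc_subset_Icc (Int.cast_le.2 (Int.le_floor.2 hy.1))
    (Int.cast_le.2 (Int.ceil_le.2 hy.2))
  convex x _ := convex_Icc _ _
  isCompact x _ := isCompact_Icc
  mem_of_openSegment x _ y hy z hz := by
    rcases lt_trichotomy x y with hxy | rfl | hyx
    · rw [openSegment_eq_Ioo hxy] at hz
      refine ⟨le_of_not_gt fun hlt ↦ ?_, (hz.1.trans_le (Int.le_ceil z)).le⟩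
      have hceil : (⌈x⌉ : ℝ) ≤ ⌊z⌋ := Int.cast_le.2 (Int.ceil_le.2 hlt.le)
      exact hz.2.not_ge ((hy.2.trans hceil).trans (Int.floor_le z))
    · rw [openSegment_same, mem_singleton_iff] at hz
      exact hz ▸ ⟨Int.floor_le z, Int.le_ceil z⟩
    · rw [openSegment_symm, openSegment_eq_Ioo hyx] at hz
      refine ⟨((Int.floor_le z).trans_lt hz.2).le, le_of_not_gt fun hlt ↦ ?_⟩
      have hfloor : (⌈z⌉ : ℝ) ≤ ⌊x⌋ := Int.cast_le.2 (Int.le_floor.2 hlt.le)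
      exact hz.1.not_ge ((Int.le_ceil z).trans (hfloor.trans hy.1))
  eventually_lineMap_mem x _ y hy := by
    rcases (Int.floor_le x).eq_or_lt with h | h
    · obtain rfl : y = x := by
        rw [← h, Int.floor_intCast, Int.ceil_intCast, Icc_self, mem_singleton_iff] at hy
        exact hy.trans h
      simp [Int.floor_le, Int.le_ceil]
    · have hcont : ContinuousAt (AffineMap.lineMap y x : ℝ → ℝ) 1 :=
        AffineMap.lineMap_continuous.continuousAt
      have hlt : x < ⌈x⌉ := (Int.lt_floor_add_one x).trans_le (by exact_mod_cast Int.lt_ceil.2 h)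
      exact hcont (by simpa using Icc_mem_nhds h hlt)
  eventually_finite y _ := by
    filter_upwards [eventually_smallSets_subset.2
      (Ioo_mem_nhds (sub_one_lt y) (lt_add_one y))] with V hV
    have hfin := finite_Icc ⌈y - 2⌉ ⌊y + 2⌋
    refine (hfin.image2 (fun m n : ℤ ↦ Icc (m : ℝ) n) hfin).subset ?_
    rintro _ ⟨⟨x, -, rfl⟩, z, hz, hzV⟩
    have hceil : (⌈x⌉ : ℝ) ≤ ⌊x⌋ + 1 := by exact_mod_cast Int.ceil_le_floor_add_one x
    obtain ⟨hyz, hzy⟩ := hV hzV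
    obtain ⟨hxz, hzx⟩ := hz
    exact mem_image2_of_mem
      ⟨Int.ceil_le.2 (by linarith), Int.le_floor.2 (by linarith)⟩
      ⟨Int.ceil_le.2 (by linarith), Int.le_floor.2 (by linarith)⟩

/-- The closed cell containing `x` in its relative interior in the subdivision of the real line at
the multiples of `2⁻ᵏ`. -/
def dyadicInterval (k : ℕ) (x : ℝ) : Set ℝ :=
  (2 ^ k * ·) ⁻¹' Icc (⌊2 ^ k * x⌋ : ℝ) ⌈2 ^ k * x⌉

theorem isCellStructure_dyadicInterval (k : ℕ) : IsCellStructure univ (dyadicInterval k) :=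
  isCellStructure_Icc_floor_ceil.preimage
    (ContinuousLinearEquiv.smulLeft (Units.mk0 ((2 : ℝ) ^ k) (by positivity)))

theorem antitone_dyadicInterval (x : ℝ) : Antitone (dyadicInterval · x) := by
  refine antitone_nat_of_succ_le fun k y hy ↦ ?_
  have hy' : 2 * (2 ^ k * y) ∈ Icc (⌊2 * (2 ^ k * x)⌋ : ℝ) ⌈2 * (2 ^ k * x)⌉ := by
    rw [← mul_assoc, ← mul_assoc, ← pow_succ']
    exact hy
  have hfloor : (2 * ⌊2 ^ k * x⌋ : ℝ) ≤ ⌊2 * (2 ^ k * x)⌋ := by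
    exact_mod_cast Int.le_floor.2 (by push_cast; linarith [Int.floor_le (2 ^ k * x)])
  have hceil : (⌈2 * (2 ^ k * x)⌉ : ℝ) ≤ 2 * ⌈2 ^ k * x⌉ := by
    exact_mod_cast Int.ceil_le.2 (by push_cast; linarith [Int.le_ceil (2 ^ k * x)])
  exact ⟨by linarith [hy'.1], by linarith [hy'.2]⟩

theorem dist_le_of_mem_dyadicInterval {k : ℕ} {x y z : ℝ} (hy : y ∈ dyadicInterval k x)
    (hz : z ∈ dyadicInterval k x) : dist y z ≤ (1 / 2) ^ k := by
  have h : dist (2 ^ k * y) (2 ^ k * z) ≤ ⌈2 ^ k * x⌉ - ⌊2 ^ k * x⌋ :=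
    Real.dist_le_of_mem_Icc hy hz
  have hceil : (⌈2 ^ k * x⌉ : ℝ) ≤ ⌊2 ^ k * x⌋ + 1 := by
    exact_mod_cast Int.ceil_le_floor_add_one (2 ^ k * x)
  rw [Real.dist_eq, ← mul_sub, abs_mul, abs_of_pos (by positivity : (0 : ℝ) < 2 ^ k)] at h
  rw [Real.dist_eq, one_div, inv_pow, ← one_div, le_div_iff₀' (by positivity)]
  linarith

theorem isCellTower_pi_dyadicInterval (ι : Type*) [Finite ι] :
    IsCellTower (univ : Set (ι → ℝ)) (fun k x ↦ univ.pi fun i ↦ dyadicInterval k (x i)) where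
  isCellStructure k := by
    simpa only [pi_univ] using IsCellStructure.pi fun _ : ι ↦ isCellStructure_dyadicInterval k
  antitone x _ _ hij := pi_mono fun i _ ↦ antitone_dyadicInterval (x i) hij
  exists_cell_subset y _ U hU := by
    have := Fintype.ofFinite ι
    obtain ⟨ε, hε, hεU⟩ := Metric.mem_nhds_iff.1 hU
    obtain ⟨j, hj⟩ := exists_pow_lt_of_lt_one (half_pos hε) (one_half_lt_one (α := ℝ))
    refine ⟨j, ?_⟩
    filter_upwards [eventually_smallSets_subset.2 (Metric.ball_mem_nhds y (half_pos hε))] with V hV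
    rintro x - ⟨z, hz, hzV⟩ w hw
    have hwz : dist w z ≤ (1 / 2) ^ j := (dist_pi_le_iff (by positivity)).2 fun i ↦
      dist_le_of_mem_dyadicInterval (hw i (mem_univ i)) (hz i (mem_univ i))
    exact hεU (by linarith [dist_triangle w z y, Metric.mem_ball.1 (hV hzV)] : dist w y < ε)

theorem exists_isCellTower_univ (E : Type*) [AddCommGroup E] [Module ℝ E] [TopologicalSpace E]
    [IsTopologicalAddGroup E] [ContinuousSMul ℝ E] [T2Space E] [FiniteDimensional ℝ E] :
    ∃ σ, IsCellTower (univ : Set E) σ :=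
  ⟨_, (isCellTower_pi_dyadicInterval _).preimage (Module.finBasis ℝ E).equivFunL⟩

end DyadicGrid

section FaceCarrier

variable {E : Type*} [AddCommGroup E] [Module ℝ E] {P : SimplicialComplex ℝ E} {x y : E}
  {s u : Finset E}

/-- The closed simplex of `P` whose relative interior contains `x`, encoded as the intersection of
all closed simplices of `P` containing `x`. -/
def faceCarrier (P : SimplicialComplex ℝ E) (x : E) : Set E :=
  ⋂ s ∈ {s ∈ P.faces | x ∈ convexHull ℝ (s : Set E)}, convexHull ℝ (s : Set E)

theorem mem_faceCarrier_self (P : SimplicialComplex ℝ E) (x : E) : x ∈ faceCarrier P x :=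
  mem_iInter₂.2 fun _ hs ↦ hs.2

theorem faceCarrier_subset (hs : s ∈ P.faces) (hx : x ∈ convexHull ℝ (s : Set E)) :
    faceCarrier P x ⊆ convexHull ℝ (s : Set E) :=
  biInter_subset_of_mem ⟨hs, hx⟩

theorem faceCarrier_subset_faceCarrier (hy : y ∈ faceCarrier P x) :
    faceCarrier P y ⊆ faceCarrier P x :=
  subset_iInter₂ fun _ hs ↦ faceCarrier_subset hs.1 (mem_iInter₂.1 hy _ hs)

theorem exists_face_faceCarrier_eq (hx : x ∈ P.space) :
    ∃ s ∈ P.faces, x ∈ convexHull ℝ (s : Set E) ∧ (∀ t ⊂ s, x ∉ convexHull ℝ (t : Set E)) ∧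
      faceCarrier P x = convexHull ℝ (s : Set E) := by
  classical
  obtain ⟨s₀, hs₀⟩ := SimplicialComplex.mem_space_iff.1 hx
  obtain ⟨s, -, hs⟩ := exists_minimal_le_of_wellFoundedLT
    (fun s : Finset E ↦ s ∈ P.faces ∧ x ∈ convexHull ℝ (s : Set E)) s₀ hs₀
  have hmin : ∀ t ⊂ s, x ∉ convexHull ℝ (t : Set E) := fun t ht hxt ↦ by
    have ht_ne : t.Nonempty := Finset.coe_nonempty.1 (convexHull_nonempty_iff.1 ⟨x, hxt⟩)
    exact hs.not_prop_of_lt ht ⟨P.down_closed hs.prop.1 ht.subset ht_ne, hxt⟩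
  refine ⟨s, hs.prop.1, hs.prop.2, hmin, (faceCarrier_subset hs.prop.1 hs.prop.2).antisymm <|
    subset_iInter₂ fun t ht ↦ convexHull_mono (Finset.coe_subset.2 ?_)⟩
  have hxst : x ∈ convexHull ℝ (s ∩ t : Set E) :=
    P.inter_subset_convexHull hs.prop.1 ht.1 ⟨hs.prop.2, ht.2⟩
  rw [← Finset.coe_inter] at hxst
  exact Finset.inter_eq_left.1 <| Finset.inter_subset_left.eq_or_ssubset.resolve_right
    fun hlt ↦ hmin _ hlt hxst

theorem mem_faceCarrier_of_mem_openSegment {z : E} (hx : x ∈ P.space) (hy : y ∈ faceCarrier P x)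
    (hz : z ∈ openSegment ℝ x y) : x ∈ faceCarrier P z := by
  classical
  obtain ⟨s, hs, hxs, -, hxc⟩ := exists_face_faceCarrier_eq hx
  refine mem_iInter₂.2 fun t ht ↦ ?_
  have hzs : z ∈ convexHull ℝ (s : Set E) :=
    (convex_convexHull ℝ _).openSegment_subset hxs (hxc ▸ hy) hz
  have hzst : z ∈ convexHull ℝ ((s ∩ t : Finset E) : Set E) := by
    rw [Finset.coe_inter]
    exact P.inter_subset_convexHull hs ht.1 ⟨hzs, ht.2⟩
  have hextreme := isExtreme_convexHull_of_affineIndependent (P.indep hs)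
    (Finset.inter_subset_left (s₂ := t))
  exact convexHull_mono (Finset.coe_subset.2 Finset.inter_subset_right)
    (hextreme.left_mem_of_mem_openSegment hxs (hxc ▸ hy) hzst hz)

theorem isCellStructure_faceCarrier [TopologicalSpace E] [IsTopologicalAddGroup E]
    [ContinuousSMul ℝ E] (hP : LocallyFiniteOn P P.space) :
    IsCellStructure P.space (faceCarrier P) where
  mem_self x _ := mem_faceCarrier_self P x
  subset_space x hx := by
    obtain ⟨s, hs, -, -, hxs⟩ := exists_face_faceCarrier_eq hx
    exact hxs ▸ SimplicialComplex.convexHull_subset_space hs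
  cell_subset_cell x _ y hy := faceCarrier_subset_faceCarrier hy
  convex x _ := convex_iInter₂ (𝕜 := ℝ) fun s _ ↦ convex_convexHull ℝ _
  isCompact x hx := by
    obtain ⟨s, -, -, -, hxs⟩ := exists_face_faceCarrier_eq hx
    exact hxs ▸ s.finite_toSet.isCompact_convexHull ℝ
  mem_of_openSegment x hx y hy z hz := mem_faceCarrier_of_mem_openSegment hx hy hz
  eventually_lineMap_mem x hx y hy := by
    obtain ⟨s, -, hx', hmin, hxs⟩ := exists_face_faceCarrier_eq hx
    rw [hxs] at hy ⊢
    exact eventually_lineMap_mem_convexHull hx' hmin hy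
  eventually_finite y hy := by
    obtain ⟨V, hV, hyV, hfin⟩ := hP y hy
    filter_upwards [eventually_smallSets_subset.2 (hV.mem_nhds hyV)] with U hU
    refine (hfin.image fun s : Finset E ↦ convexHull ℝ (s : Set E)).subset ?_
    rintro _ ⟨⟨x, hx, rfl⟩, hxU⟩
    obtain ⟨s, hs, -, -, hxs⟩ := exists_face_faceCarrier_eq hx
    exact ⟨s, ⟨hs, hxs ▸ hxU.mono (inter_subset_inter_right _ hU)⟩, hxs.symm⟩

end FaceCarrier

end

theorem triangulation_of_open_subset_general {E : Type*} [AddCommGroup E] [Module ℝ E]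
    [TopologicalSpace E] [IsTopologicalAddGroup E] [ContinuousSMul ℝ E] [T2Space E]
    [FiniteDimensional ℝ E] (P : SimplicialComplex ℝ E) (hP : LocallyFiniteOn P P.space)
    (O : Set E) (hO : ∃ V : Set E, IsOpen V ∧ O = V ∩ P.space) (𝒲 : Set (Set E))
    (h𝒲open : ∀ W ∈ 𝒲, ∃ V : Set E, IsOpen V ∧ W = V ∩ O) (h𝒲cov : O ⊆ ⋃₀ 𝒲) :
    ∃ L : SimplicialComplex ℝ E, L.space = O ∧ LocallyFiniteOn L O ∧
      ∀ s ∈ L.faces, ∃ W ∈ 𝒲, convexHull ℝ (s : Set E) ⊆ W := by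
  have h𝒲space : ∀ W ∈ 𝒲, ∃ V, IsOpen V ∧ W = V ∩ (univ ∩ P.space) := by
    obtain ⟨V, hV, rfl⟩ := hO
    intro W hW
    obtain ⟨V', hV', rfl⟩ := h𝒲open W hW
    exact ⟨V' ∩ V, hV'.inter hV, by rw [univ_inter, inter_assoc]⟩
  have hO_eq : O = ⋃₀ 𝒲 := h𝒲cov.antisymm <| sUnion_subset fun W hW ↦ by
    obtain ⟨V, -, rfl⟩ := h𝒲open W hW
    exact inter_subset_right
  obtain ⟨σ, hσ⟩ := exists_isCellTower_univ E
  obtain ⟨τ, hτ, hτ𝒲⟩ :=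
    (hσ.inter (isCellStructure_faceCarrier hP)).exists_isCellStructure_sUnion h𝒲space
  obtain ⟨L, hLO, hLfin, hLτ⟩ := hτ.exists_triangulation
  rw [← hO_eq] at hLO hLfin hLτ hτ𝒲
  refine ⟨L, hLO, hLfin, fun s hs ↦ ?_⟩
  obtain ⟨x, hx, hsx⟩ := hLτ s hs
  exact (hτ𝒲 x hx).imp fun W ↦ And.imp_right hsx.trans

/-- Let `P` be a finite simplicial complex in `ℝⁿ`, `O` an open subset of `|P|`
and `𝒲` an open cover of `O`. Then there is a simplicial complex `L` with `|L| = O`, locally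
finite in `O`, whose closed simplexes are each contained in some member of `𝒲`. -/
theorem triangulation_of_open_subset
    {n : ℕ} (P : Geometry.SimplicialComplex ℝ (Fin n → ℝ)) (hP : P.faces.Finite)
    (O : Set (Fin n → ℝ)) (hO : ∃ V : Set (Fin n → ℝ), IsOpen V ∧ O = V ∩ P.space)
    (𝒲 : Set (Set (Fin n → ℝ)))
    (h𝒲open : ∀ W ∈ 𝒲, ∃ V : Set (Fin n → ℝ), IsOpen V ∧ W = V ∩ O)
    (h𝒲cov : O ⊆ ⋃₀ 𝒲) :
    ∃ L : Geometry.SimplicialComplex ℝ (Fin n → ℝ),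
      L.space = O ∧
      (∀ y ∈ O, ∃ V : Set (Fin n → ℝ), IsOpen V ∧ y ∈ V ∧
        {s ∈ L.faces | (convexHull ℝ (s : Set (Fin n → ℝ)) ∩ V).Nonempty}.Finite) ∧
      (∀ s ∈ L.faces, ∃ W ∈ 𝒲, convexHull ℝ (s : Set (Fin n → ℝ)) ⊆ W) := by
  exact triangulation_of_open_subset_general P (.of_finite hP _) O hO 𝒲 h𝒲open h𝒲cov
end
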